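/- arXiv:1904.11538 — 7 statements merged into one kernel-verified Lean document; each statement's English description precedes it below -/
import Mathlib

section
/- The dynamic programming operator F satisfies ‖F Q − F Q′‖_π ≤ β ‖Q − Q′‖_π for all Q, Q′ ∈ L²(π), i.e., F is a β-contraction on L²(π). -/
open MeasureTheory ProbabilityTheory

open scoped ENNReal

/-! A Markov kernel `κ` averages, so by Jensen's inequality `|∫ f dκ(x)|` is at most the `Lᵖ(κ(x))`
norm of `f`. Integrating the `p`-th power of that norm against `μ` gives the `p`-th power of the
`Lᵖ(κ ∘ₘ μ)` norm, so `f ↦ ∫ f dκ(·)` is nonexpansive from `Lᵖ(κ ∘ₘ μ)` to `Lᵖ(μ)`, and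
`κ ∘ₘ μ = μ` when `μ` is invariant. As `Q ↦ min(c_s, Q)` is pointwise nonexpansive, only the
factor `β` remains. -/

section Kernel

variable {X Y E : Type*} [MeasurableSpace X] [MeasurableSpace Y] [NormedAddCommGroup E]
  {κ : Kernel X Y} {μ : Measure X} {p : ℝ≥0∞} {f g : Y → E}

theorem ae_memLp_of_memLp_comp (hf : MemLp f p (κ ∘ₘ μ)) : ∀ᵐ x ∂μ, MemLp f p (κ x) := by
  have hmeas : ∀ᵐ x ∂μ, AEStronglyMeasurable f (κ x) := by
    filter_upwards [Measure.ae_ae_of_ae_comp hf.1.ae_eq_mk] with x hx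
    exact ⟨hf.1.mk f, hf.1.stronglyMeasurable_mk, hx⟩
  rcases eq_or_ne p 0 with rfl | hp0
  · simpa only [memLp_zero_iff_aestronglyMeasurable] using hmeas
  rcases eq_or_ne p ∞ with rfl | hp
  · filter_upwards [hmeas, Measure.ae_ae_of_ae_comp (enorm_ae_le_eLpNormEssSup f (κ ∘ₘ μ))]
      with x hx hbound
    exact ⟨hx, (eLpNormEssSup_le_of_ae_enorm_bound hbound).trans_lt hf.eLpNorm_lt_top⟩
  · have hpow : Integrable (fun y ↦ ‖f y‖ ^ p.toReal) (κ ∘ₘ μ) := hf.integrable_norm_rpow hp0 hp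
    filter_upwards [hmeas, Measure.ae_integrable_of_integrable_comp hpow] with x hx hint
    exact (integrable_norm_rpow_iff hx hp0 hp).1 hint

theorem eLpNorm_eLpNorm_kernel_le (hf : AEStronglyMeasurable f (κ ∘ₘ μ)) :
    eLpNorm (fun x ↦ eLpNorm f p (κ x)) p μ ≤ eLpNorm f p (κ ∘ₘ μ) := by
  rcases eq_or_ne p 0 with rfl | hp0
  · simp only [eLpNorm_exponent_zero, le_refl]
  rcases eq_or_ne p ∞ with rfl | hp
  · simp only [eLpNorm_exponent_top]
    refine eLpNormEssSup_le_of_ae_enorm_bound ?_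
    filter_upwards [Measure.ae_ae_of_ae_comp (enorm_ae_le_eLpNormEssSup f (κ ∘ₘ μ))] with x hx
    exact eLpNormEssSup_le_of_ae_enorm_bound hx
  · have hp' : p.toReal ≠ 0 := ENNReal.toReal_ne_zero.2 ⟨hp0, hp⟩
    simp only [eLpNorm_eq_lintegral_rpow_enorm_toReal hp0 hp, enorm_eq_self, one_div,
      ENNReal.rpow_inv_rpow hp']
    rw [Measure.lintegral_bind κ.aemeasurable (hf.enorm.pow_const _)]

variable [NormedSpace ℝ E]

theorem enorm_integral_le_eLpNorm {ν : Measure Y} [IsProbabilityMeasure ν] (hp : 1 ≤ p)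
    (hf : AEStronglyMeasurable f ν) : ‖∫ y, f y ∂ν‖ₑ ≤ eLpNorm f p ν :=
  calc ‖∫ y, f y ∂ν‖ₑ ≤ ∫⁻ y, ‖f y‖ₑ ∂ν := enorm_integral_le_lintegral_enorm f
    _ = eLpNorm f 1 ν := eLpNorm_one_eq_lintegral_enorm.symm
    _ ≤ eLpNorm f p ν := eLpNorm_le_eLpNorm_of_exponent_le hp hf

theorem eLpNorm_integral_kernel_sub_le [IsMarkovKernel κ] (hp : 1 ≤ p)
    (hf : MemLp f p (κ ∘ₘ μ)) (hg : MemLp g p (κ ∘ₘ μ)) :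
    eLpNorm (fun x ↦ ∫ y, f y ∂κ x - ∫ y, g y ∂κ x) p μ ≤ eLpNorm (f - g) p (κ ∘ₘ μ) := by
  have hpoint : ∀ᵐ x ∂μ,
      ‖∫ y, f y ∂κ x - ∫ y, g y ∂κ x‖ₑ ≤ ‖eLpNorm (f - g) p (κ x)‖ₑ := by
    filter_upwards [ae_memLp_of_memLp_comp hf, ae_memLp_of_memLp_comp hg] with x hfx hgx
    rw [← integral_sub (hfx.integrable hp) (hgx.integrable hp), enorm_eq_self]
    exact enorm_integral_le_eLpNorm hp (hfx.sub hgx).1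
  exact (eLpNorm_mono_enorm_ae hpoint).trans (eLpNorm_eLpNorm_kernel_le (hf.sub hg).1)

end Kernel

theorem dp_operator_beta_contraction_general
    {X : Type*} [MeasurableSpace X] {P : Kernel X X} [IsMarkovKernel P]
    {π : Measure X} (hinv : P.Invariant π) {p : ℝ≥0∞} (hp : 1 ≤ p)
    (β : ℝ) (c : X → ℝ) {cs : X → ℝ} (hcs : MemLp cs p π)
    {F : (X → ℝ) → (X → ℝ)}
    (hF : ∀ Q x, F Q x = c x + β * ∫ y, min (cs y) (Q y) ∂(P x))
    {Q Q' : X → ℝ} (hQ : MemLp Q p π) (hQ' : MemLp Q' p π) :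
    eLpNorm (fun x ↦ F Q x - F Q' x) p π ≤ ‖β‖ₑ * eLpNorm (fun x ↦ Q x - Q' x) p π := by
  have hsub : (fun x ↦ F Q x - F Q' x) =
      β • fun x ↦ ∫ y, (cs ⊓ Q) y ∂P x - ∫ y, (cs ⊓ Q') y ∂P x := by
    ext x
    simp only [hF, Pi.smul_apply, Pi.inf_apply, smul_eq_mul]
    ring
  have hmin : MemLp (cs ⊓ Q) p (P ∘ₘ π) := by rw [hinv.def]; exact hcs.inf hQ
  have hmin' : MemLp (cs ⊓ Q') p (P ∘ₘ π) := by rw [hinv.def]; exact hcs.inf hQ'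
  rw [hsub, eLpNorm_const_smul]
  gcongr
  calc eLpNorm (fun x ↦ ∫ y, (cs ⊓ Q) y ∂P x - ∫ y, (cs ⊓ Q') y ∂P x) p π
      ≤ eLpNorm (cs ⊓ Q - cs ⊓ Q') p (P ∘ₘ π) := eLpNorm_integral_kernel_sub_le hp hmin hmin'
    _ = eLpNorm (cs ⊓ Q - cs ⊓ Q') p π := by rw [hinv.def]
    _ ≤ eLpNorm (fun x ↦ Q x - Q' x) p π := eLpNorm_mono fun x ↦ by
      simpa only [Pi.sub_apply, Pi.inf_apply, inf_comm (cs x)]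
        using norm_inf_sub_inf_le_norm (Q x) (Q' x) (cs x)

/-- The dynamic programming operator
`F Q (x) = c(x) + β ∫ min(c_s(y), Q(y)) P(x,dy)` satisfies
`‖F Q − F Q′‖_π ≤ β ‖Q − Q′‖_π` for all `Q, Q′ ∈ L²(π)`,
i.e., `F` is a `β`-contraction on `L²(π)`. -/
theorem dp_operator_beta_contraction
    {X : Type*} [MeasurableSpace X]
    (P : Kernel X X) [IsMarkovKernel P]
    (π : Measure X) [IsProbabilityMeasure π]
    (hinv : π.bind (fun x => P x) = π)
    (β : ℝ) (hβ : β ∈ Set.Ioo (0 : ℝ) 1)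
    (c cs : X → ℝ) (hcm : Measurable c) (hcsm : Measurable cs)
    (hc2 : MemLp c 2 π) (hcs2 : MemLp cs 2 π)
    (F : (X → ℝ) → (X → ℝ))
    (hF : ∀ Q x, F Q x = c x + β * ∫ y, min (cs y) (Q y) ∂(P x))
    (Q Q' : X → ℝ) (hQm : Measurable Q) (hQ'm : Measurable Q')
    (hQ2 : MemLp Q 2 π) (hQ'2 : MemLp Q' 2 π) :
    eLpNorm (fun x => F Q x - F Q' x) 2 π ≤
      ENNReal.ofReal β * eLpNorm (fun x => Q x - Q' x) 2 π := by
  rw [← Real.enorm_of_nonneg hβ.1.le]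
  exact dp_operator_beta_contraction_general hinv one_le_two β c hcs2 hF hQ2 hQ'2
end

section
/- For each θ ∈ ℝ^d and every vector v ∈ ℝ^d, the matrix A(θ) satisfies −vᵀ A(θ) v ≥ (1 − β) vᵀ Σ_ψ v, where Σ_ψ = ∫ ψ(x) ψ(x)ᵀ π(dx). -/
open MeasureTheory ProbabilityTheory Matrix

/-!
Let `(x, y)` be a step of the chain started from `π`, so that `y` also has law `π`. Put
`u = vᵀψ` and `c = β 𝟙{θᵀψ < c_s}`. Then `vᵀ A(θ) v = 𝔼[u(x) c(y) u(y)] - 𝔼[u(x)²]`, and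
`|c| ≤ β` together with AM-GM gives `u(x) c(y) u(y) ≤ β (u(x)² + u(y)²) / 2`, whose mean is
`β 𝔼[u²]` by stationarity.
-/

section MixedMoment

variable {Ω m n : Type*} [MeasurableSpace Ω]

/-- The mixed second moment matrix `𝔼[F Gᵀ]` of two random vectors, with `𝔼` the integral against
`μ`. It represents both `Σ_ψ` and, on pairs of successive states, `A(θ)`. -/
noncomputable def mixedMomentMatrix (μ : Measure Ω) (F : Ω → m → ℝ) (G : Ω → n → ℝ) :
    Matrix m n ℝ :=
  Matrix.of fun i j => ∫ ω, F ω i * G ω j ∂μ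

variable [Fintype m] [Fintype n] {μ : Measure Ω} {F : Ω → m → ℝ} {G : Ω → n → ℝ}

theorem dotProduct_mixedMomentMatrix_mulVec
    (h : ∀ i j, Integrable (fun ω => F ω i * G ω j) μ) (v : m → ℝ) (w : n → ℝ) :
    v ⬝ᵥ (mixedMomentMatrix μ F G *ᵥ w) = ∫ ω, (v ⬝ᵥ F ω) * (w ⬝ᵥ G ω) ∂μ := by
  have hvw (i : m) (j : n) : Integrable (fun ω => v i * w j * (F ω i * G ω j)) μ :=
    (h i j).const_mul _
  calc v ⬝ᵥ (mixedMomentMatrix μ F G *ᵥ w)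
      = ∑ i, ∑ j, ∫ ω, v i * w j * (F ω i * G ω j) ∂μ := by
        simp only [dotProduct, mulVec, mixedMomentMatrix, of_apply, Finset.mul_sum,
          integral_const_mul]
        exact Finset.sum_congr rfl fun i _ => Finset.sum_congr rfl fun j _ => by ring
    _ = ∫ ω, ∑ i, ∑ j, v i * w j * (F ω i * G ω j) ∂μ := by
        rw [integral_finsetSum _ fun i _ => integrable_finsetSum _ fun j _ => hvw i j]
        exact Finset.sum_congr rfl fun i _ => (integral_finsetSum _ fun j _ => hvw i j).symm
    _ = ∫ ω, (v ⬝ᵥ F ω) * (w ⬝ᵥ G ω) ∂μ := by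
        simp only [dotProduct, Finset.sum_mul_sum, mul_mul_mul_comm]

theorem memLp_dotProduct {p : ENNReal} (hF : ∀ i, MemLp (fun ω => F ω i) p μ) (v : m → ℝ) :
    MemLp (fun ω => v ⬝ᵥ F ω) p μ :=
  memLp_finsetSum _ fun i _ => (hF i).const_mul (v i)

end MixedMoment

theorem memLp_mul_of_abs_le {Ω : Type*} [MeasurableSpace Ω] {μ : Measure Ω} {p : ENNReal}
    {c f : Ω → ℝ} {γ : ℝ} (hc : AEStronglyMeasurable c μ) (hcγ : ∀ᵐ ω ∂μ, |c ω| ≤ γ)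
    (hf : MemLp f p μ) : MemLp (fun ω => c ω * f ω) p μ :=
  hf.mul' (memLp_top_of_bound hc γ hcγ)

theorem mul_mul_le_mul_half_add_sq {c γ : ℝ} (hc : |c| ≤ γ) (a b : ℝ) :
    a * (c * b) ≤ γ * ((a ^ 2 + b ^ 2) / 2) :=
  calc a * (c * b) ≤ |a * (c * b)| := le_abs_self _
    _ = |c| * (|a| * |b|) := by rw [abs_mul, abs_mul, mul_left_comm]
    _ ≤ |c| * ((a ^ 2 + b ^ 2) / 2) := by
      gcongr
      linarith [two_mul_le_add_sq |a| |b|, sq_abs a, sq_abs b]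
    _ ≤ γ * ((a ^ 2 + b ^ 2) / 2) := by gcongr

section StationaryPair

variable {Ω X : Type*} [MeasurableSpace Ω] [MeasurableSpace X] {μ : Measure Ω} {π : Measure X}

theorem integral_comp_of_measurePreserving {E : Type*} [NormedAddCommGroup E] [NormedSpace ℝ E]
    {T : Ω → X} (hT : MeasurePreserving T μ π) {f : X → E} (hf : AEStronglyMeasurable f π) :
    ∫ ω, f (T ω) ∂μ = ∫ x, f x ∂π := by
  rw [← hT.map_eq] at hf ⊢
  exact (integral_map hT.aemeasurable hf).symm

theorem measurePreserving_fst_compProd {Y : Type*} [MeasurableSpace Y] (κ : Kernel X Y)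
    [IsMarkovKernel κ] [SFinite π] : MeasurePreserving Prod.fst (π ⊗ₘ κ) π :=
  ⟨measurable_fst, Measure.fst_compProd π κ⟩

theorem measurePreserving_snd_compProd_of_invariant {P : Kernel X X} [IsSFiniteKernel P]
    [SFinite π] (hP : P.Invariant π) : MeasurePreserving Prod.snd (π ⊗ₘ P) π :=
  ⟨measurable_snd, (Measure.snd_compProd π P).trans hP⟩

variable {S T : Ω → X} {c : X → ℝ} {γ : ℝ}

theorem integral_mul_mul_le_mul_integral_sq (hS : MeasurePreserving S μ π)
    (hT : MeasurePreserving T μ π) (hc : AEStronglyMeasurable c π) (hcγ : ∀ᵐ x ∂π, |c x| ≤ γ)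
    {u : X → ℝ} (hu : MemLp u 2 π) :
    ∫ ω, u (S ω) * (c (T ω) * u (T ω)) ∂μ ≤ γ * ∫ x, u x ^ 2 ∂π := by
  have huS : MemLp (fun ω => u (S ω)) 2 μ := hu.comp_measurePreserving hS
  have huT : MemLp (fun ω => u (T ω)) 2 μ := hu.comp_measurePreserving hT
  have hcu : MemLp (fun x => c x * u x) 2 π := memLp_mul_of_abs_le hc hcγ hu
  have hcuT : MemLp (fun ω => c (T ω) * u (T ω)) 2 μ := hcu.comp_measurePreserving hT
  have hsq : AEStronglyMeasurable (fun x => u x ^ 2) π := hu.1.pow 2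
  calc ∫ ω, u (S ω) * (c (T ω) * u (T ω)) ∂μ
      ≤ ∫ ω, γ * ((u (S ω) ^ 2 + u (T ω) ^ 2) / 2) ∂μ := by
        refine integral_mono_ae (huS.integrable_mul hcuT)
          (((huS.integrable_sq.add huT.integrable_sq).div_const 2).const_mul γ) ?_
        filter_upwards [hT.quasiMeasurePreserving.ae hcγ] with ω hω
        exact mul_mul_le_mul_half_add_sq hω _ _
    _ = γ * ((∫ x, u x ^ 2 ∂π + ∫ x, u x ^ 2 ∂π) / 2) := by
        rw [integral_const_mul, integral_div, integral_add huS.integrable_sq huT.integrable_sq,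
          integral_comp_of_measurePreserving hS hsq, integral_comp_of_measurePreserving hT hsq]
    _ = γ * ∫ x, u x ^ 2 ∂π := by rw [add_self_div_two]

end StationaryPair

section TDMatrix

variable {X ι : Type*} [MeasurableSpace X]

/-- The mean matrix `∫∫ ψ(x) (c(y) ψ(y) - ψ(x))ᵀ P(x,dy) π(dx)` of temporal-difference learning
with features `ψ` and a state-dependent discount factor `c`. The matrix `A(θ)` of optimal stopping
is the case `c = β 𝟙{θᵀψ < c_s}`. -/
noncomputable def tdMatrix (P : Kernel X X) (π : Measure X) (c : X → ℝ) (ψ : X → ι → ℝ) :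
    Matrix ι ι ℝ :=
  Matrix.of fun i j => ∫ x, ∫ y, ψ x i * (c y * ψ y j - ψ x j) ∂(P x) ∂π

variable {P : Kernel X X} [IsMarkovKernel P] {π : Measure X} [SFinite π] {c : X → ℝ} {γ : ℝ}
  {ψ : X → ι → ℝ}

theorem integrable_tdMatrix_integrand (hP : P.Invariant π) (hc : AEStronglyMeasurable c π)
    (hcγ : ∀ᵐ x ∂π, |c x| ≤ γ) (hψ : ∀ i, MemLp (fun x => ψ x i) 2 π) (i j : ι) :
    Integrable (fun z : X × X => ψ z.1 i * (c z.2 • ψ z.2 - ψ z.1) j) (π ⊗ₘ P) := by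
  have hψ₁ (k : ι) : MemLp (fun z : X × X => ψ z.1 k) 2 (π ⊗ₘ P) :=
    (hψ k).comp_measurePreserving (measurePreserving_fst_compProd P)
  have hcψ₂ : MemLp (fun z : X × X => c z.2 * ψ z.2 j) 2 (π ⊗ₘ P) :=
    (memLp_mul_of_abs_le hc hcγ (hψ j)).comp_measurePreserving
      (measurePreserving_snd_compProd_of_invariant hP)
  exact (hψ₁ i).integrable_mul (hcψ₂.sub (hψ₁ j))

theorem tdMatrix_eq_mixedMomentMatrix (hP : P.Invariant π) (hc : AEStronglyMeasurable c π)
    (hcγ : ∀ᵐ x ∂π, |c x| ≤ γ) (hψ : ∀ i, MemLp (fun x => ψ x i) 2 π) :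
    tdMatrix P π c ψ =
      mixedMomentMatrix (π ⊗ₘ P) (fun z => ψ z.1) (fun z => c z.2 • ψ z.2 - ψ z.1) :=
  Matrix.ext fun i j =>
    (Measure.integral_compProd (integrable_tdMatrix_integrand hP hc hcγ hψ i j)).symm

variable [Fintype ι]

theorem dotProduct_tdMatrix_mulVec (hP : P.Invariant π) (hc : AEStronglyMeasurable c π)
    (hcγ : ∀ᵐ x ∂π, |c x| ≤ γ) (hψ : ∀ i, MemLp (fun x => ψ x i) 2 π) (v : ι → ℝ) :
    v ⬝ᵥ (tdMatrix P π c ψ *ᵥ v) =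
      ∫ z, (v ⬝ᵥ ψ z.1) * (c z.2 * (v ⬝ᵥ ψ z.2)) ∂(π ⊗ₘ P) - ∫ x, (v ⬝ᵥ ψ x) ^ 2 ∂π := by
  have hu : MemLp (fun x => v ⬝ᵥ ψ x) 2 π := memLp_dotProduct hψ v
  have hu₁ : MemLp (fun z : X × X => v ⬝ᵥ ψ z.1) 2 (π ⊗ₘ P) :=
    hu.comp_measurePreserving (measurePreserving_fst_compProd P)
  have hcu₂ : MemLp (fun z : X × X => c z.2 * (v ⬝ᵥ ψ z.2)) 2 (π ⊗ₘ P) :=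
    (memLp_mul_of_abs_le hc hcγ hu).comp_measurePreserving
      (measurePreserving_snd_compProd_of_invariant hP)
  calc v ⬝ᵥ (tdMatrix P π c ψ *ᵥ v)
      = ∫ z, ((v ⬝ᵥ ψ z.1) * (c z.2 * (v ⬝ᵥ ψ z.2)) - (v ⬝ᵥ ψ z.1) ^ 2) ∂(π ⊗ₘ P) := by
        rw [tdMatrix_eq_mixedMomentMatrix hP hc hcγ hψ,
          dotProduct_mixedMomentMatrix_mulVec (integrable_tdMatrix_integrand hP hc hcγ hψ)]
        simp only [dotProduct_sub, dotProduct_smul, smul_eq_mul, mul_sub, sq]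
    _ = ∫ z, (v ⬝ᵥ ψ z.1) * (c z.2 * (v ⬝ᵥ ψ z.2)) ∂(π ⊗ₘ P) -
          ∫ z, (v ⬝ᵥ ψ z.1) ^ 2 ∂(π ⊗ₘ P) :=
        integral_sub (hu₁.integrable_mul hcu₂) hu₁.integrable_sq
    _ = ∫ z, (v ⬝ᵥ ψ z.1) * (c z.2 * (v ⬝ᵥ ψ z.2)) ∂(π ⊗ₘ P) - ∫ x, (v ⬝ᵥ ψ x) ^ 2 ∂π :=
        congrArg _ (integral_comp_of_measurePreserving (measurePreserving_fst_compProd P)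
          (hu.1.pow 2))

theorem Atheta_negative_definite_bound_general (hP : P.Invariant π)
    (hc : AEStronglyMeasurable c π) (hcγ : ∀ᵐ x ∂π, |c x| ≤ γ)
    (hψ : ∀ i, MemLp (fun x => ψ x i) 2 π) (v : ι → ℝ) :
    (1 - γ) * (v ⬝ᵥ (mixedMomentMatrix π ψ ψ *ᵥ v)) ≤ -(v ⬝ᵥ (tdMatrix P π c ψ *ᵥ v)) := by
  have hS : v ⬝ᵥ (mixedMomentMatrix π ψ ψ *ᵥ v) = ∫ x, (v ⬝ᵥ ψ x) ^ 2 ∂π := by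
    simp only [sq, dotProduct_mixedMomentMatrix_mulVec fun i j => (hψ i).integrable_mul (hψ j)]
  have hcorr : ∫ z, (v ⬝ᵥ ψ z.1) * (c z.2 * (v ⬝ᵥ ψ z.2)) ∂(π ⊗ₘ P) ≤
      γ * ∫ x, (v ⬝ᵥ ψ x) ^ 2 ∂π :=
    integral_mul_mul_le_mul_integral_sq (measurePreserving_fst_compProd P)
      (measurePreserving_snd_compProd_of_invariant hP) hc hcγ (memLp_dotProduct hψ v)
  rw [hS, dotProduct_tdMatrix_mulVec hP hc hcγ hψ v]
  linarith

end TDMatrix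

/-- For each `θ ∈ ℝ^d` and each `v ∈ ℝ^d`, the matrix
`A(θ) = ∫∫ ψ(x)(β 𝟙{θᵀψ(y) < c_s(y)} ψ(y) − ψ(x))ᵀ P(x,dy) π(dx)` satisfies
`−vᵀ A(θ) v ≥ (1 − β) vᵀ Σ_ψ v`, where `Σ_ψ = ∫ ψ(x) ψ(x)ᵀ π(dx)`. -/
theorem Atheta_negative_definite_bound
    {X : Type*} [MeasurableSpace X] {d : ℕ}
    (P : Kernel X X) [IsMarkovKernel P]
    (π : Measure X) [IsProbabilityMeasure π]
    (hinv : π.bind (fun x => P x) = π)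
    (β : ℝ) (hβ : β ∈ Set.Ioo (0 : ℝ) 1)
    (cs : X → ℝ) (hcsm : Measurable cs)
    (ψ : X → Fin d → ℝ) (hψm : Measurable ψ)
    (hψ2 : ∀ i, MemLp (fun x => ψ x i) 2 π)
    (A : (Fin d → ℝ) → Matrix (Fin d) (Fin d) ℝ)
    (hA : ∀ θ i j, A θ i j =
      ∫ x, ∫ y, ψ x i * (β * (if θ ⬝ᵥ ψ y < cs y then ψ y j else 0) - ψ x j)
        ∂(P x) ∂π)
    (Sψ : Matrix (Fin d) (Fin d) ℝ)
    (hSψ : ∀ i j, Sψ i j = ∫ x, ψ x i * ψ x j ∂π)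
    (θ v : Fin d → ℝ) :
    (1 - β) * (v ⬝ᵥ (Sψ *ᵥ v)) ≤ -(v ⬝ᵥ (A θ *ᵥ v)) := by
  have hcont : MeasurableSet {y | θ ⬝ᵥ ψ y < cs y} :=
    measurableSet_lt (by unfold dotProduct; fun_prop) hcsm
  let c : X → ℝ := fun y => if θ ⬝ᵥ ψ y < cs y then β else 0
  have hc : Measurable c := measurable_const.ite hcont measurable_const
  have hcβ (y : X) : |c y| ≤ β := by
    dsimp only [c]
    split_ifs <;> simp [abs_of_pos hβ.1, hβ.1.le]
  have hAθ : A θ = tdMatrix P π c ψ := by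
    ext i j
    simp only [hA, tdMatrix, of_apply, c, mul_ite, ite_mul, mul_zero, zero_mul]
  rw [hAθ, show Sψ = mixedMomentMatrix π ψ ψ from Matrix.ext hSψ]
  exact Atheta_negative_definite_bound_general hinv hc.aestronglyMeasurable
    (ae_of_all _ hcβ) hψ2 v
end

section
/- The map θ ↦ b(θ) = −A(θ)θ − β c̄_s(θ) is Lipschitz continuous on ℝ^d: for all θ¹, θ² ∈ ℝ^d, ‖b(θ¹) − b(θ²)‖ ≤ (1 + β) (∫ ‖ψ(x)‖² π(dx)) ‖θ¹ − θ²‖. -/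
open MeasureTheory ProbabilityTheory Matrix

/-- The Euclidean norm on `ℝ^d` (vectors as functions `Fin d → ℝ`). -/
noncomputable def euclNorm {d : ℕ} (v : Fin d → ℝ) : ℝ :=
  Real.sqrt (∑ i, v i ^ 2)

/-!
Since `β q 𝟙{q < s} + β s 𝟙{s ≤ q} = β min(s, q)` with `q = θᵀψ(y)` and `s = c_s(y)`, the two pieces
of `b` recombine into the mean temporal difference
`b(θ) = 𝔼[(θᵀψ(x) - β min(c_s(y), θᵀψ(y))) ψ(x)]`, the expectation being under the stationary law of
a transition `(x, y)`. The map `q ↦ min(s, q)` is 1-Lipschitz, so the integrand varies by at most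
`(‖ψ(x)‖ + |β| ‖ψ(y)‖) ‖ψ(x)‖ ‖θ₁ - θ₂‖`, and by Young's inequality and stationarity the mean of
`‖ψ(x)‖ ‖ψ(y)‖` is at most that of `‖ψ(x)‖²`.
-/

section Hilbert

open scoped RealInnerProductSpace

variable {E : Type*} [NormedAddCommGroup E] [InnerProductSpace ℝ E]

/-- The temporal difference `⟪θ, u⟫ - β min(s, ⟪θ, v⟫)` of optimal stopping with linear function
approximation: `u` and `v` are the features of the current and of the next state, `s` is the
stopping cost at the next state. Running costs, which do not involve `θ`, are left out. -/
noncomputable def stoppingTD (β : ℝ) (u v : E) (s : ℝ) (θ : E) : ℝ :=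
  ⟪θ, u⟫ - β * min s ⟪θ, v⟫

theorem abs_stoppingTD_sub_le (β : ℝ) (u v : E) (s : ℝ) (θ₁ θ₂ : E) :
    |stoppingTD β u v s θ₁ - stoppingTD β u v s θ₂| ≤ (‖u‖ + |β| * ‖v‖) * ‖θ₁ - θ₂‖ := by
  have h_min : |min s ⟪θ₁, v⟫ - min s ⟪θ₂, v⟫| ≤ ‖θ₁ - θ₂‖ * ‖v‖ :=
    calc |min s ⟪θ₁, v⟫ - min s ⟪θ₂, v⟫|
      _ ≤ |⟪θ₁, v⟫ - ⟪θ₂, v⟫| := by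
        simpa using abs_min_sub_min_le_max s ⟪θ₁, v⟫ s ⟪θ₂, v⟫
      _ = |⟪θ₁ - θ₂, v⟫| := by rw [inner_sub_left]
      _ ≤ ‖θ₁ - θ₂‖ * ‖v‖ := abs_real_inner_le_norm _ _
  calc |stoppingTD β u v s θ₁ - stoppingTD β u v s θ₂|
    _ = |⟪θ₁ - θ₂, u⟫ - β * (min s ⟪θ₁, v⟫ - min s ⟪θ₂, v⟫)| := by
      rw [stoppingTD, stoppingTD, inner_sub_left]; ring_nf
    _ ≤ |⟪θ₁ - θ₂, u⟫| + |β * (min s ⟪θ₁, v⟫ - min s ⟪θ₂, v⟫)| := abs_sub _ _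
    _ ≤ ‖θ₁ - θ₂‖ * ‖u‖ + |β| * (‖θ₁ - θ₂‖ * ‖v‖) := by
      rw [abs_mul]
      gcongr
      exact abs_real_inner_le_norm _ _
    _ = (‖u‖ + |β| * ‖v‖) * ‖θ₁ - θ₂‖ := by ring

variable {Ω : Type*} [MeasurableSpace Ω] {μ : Measure Ω} {U V : Ω → E} {g : Ω → ℝ}

/-- The mean of the temporal difference `stoppingTD` times the current feature `U`, where `U`, `V`
and `g` are the current feature, the next feature and the next stopping cost, as random variables
under `μ`. -/
noncomputable def stoppingMeanField (μ : Measure Ω) (β : ℝ) (U V : Ω → E) (g : Ω → ℝ) (θ : E) : E :=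
  ∫ ω, stoppingTD β (U ω) (V ω) (g ω) θ • U ω ∂μ

theorem memLp_stoppingTD {p : ENNReal} (hU : MemLp U p μ) (hV : MemLp V p μ) (hg : MemLp g p μ)
    (β : ℝ) (θ : E) : MemLp (fun ω => stoppingTD β (U ω) (V ω) (g ω) θ) p μ :=
  (hU.const_inner θ).sub ((hg.inf (hV.const_inner θ)).const_mul β)

theorem integrable_stoppingTD_smul (hU : MemLp U 2 μ) (hV : MemLp V 2 μ) (hg : MemLp g 2 μ)
    (β : ℝ) (θ : E) : Integrable (fun ω => stoppingTD β (U ω) (V ω) (g ω) θ • U ω) μ :=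
  memLp_one_iff_integrable.1 (hU.smul (memLp_stoppingTD hU hV hg β θ))

theorem norm_stoppingMeanField_sub_le (hU : MemLp U 2 μ) (hV : MemLp V 2 μ) (hg : MemLp g 2 μ)
    (hUV : ∫ ω, ‖V ω‖ ^ 2 ∂μ = ∫ ω, ‖U ω‖ ^ 2 ∂μ) (β : ℝ) (θ₁ θ₂ : E) :
    ‖stoppingMeanField μ β U V g θ₁ - stoppingMeanField μ β U V g θ₂‖ ≤
      (1 + |β|) * (∫ ω, ‖U ω‖ ^ 2 ∂μ) * ‖θ₁ - θ₂‖ := by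
  have hU_sq : Integrable (fun ω => ‖U ω‖ ^ 2) μ := hU.norm.integrable_sq
  have hV_sq : Integrable (fun ω => ‖V ω‖ ^ 2) μ := hV.norm.integrable_sq
  have h_pointwise : ∀ ω, ‖stoppingTD β (U ω) (V ω) (g ω) θ₁ • U ω -
      stoppingTD β (U ω) (V ω) (g ω) θ₂ • U ω‖ ≤
        ((1 + |β| / 2) * ‖U ω‖ ^ 2 + |β| / 2 * ‖V ω‖ ^ 2) * ‖θ₁ - θ₂‖ := fun ω => by
    rw [← sub_smul, norm_smul, Real.norm_eq_abs]
    calc |stoppingTD β (U ω) (V ω) (g ω) θ₁ - stoppingTD β (U ω) (V ω) (g ω) θ₂| * ‖U ω‖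
      _ ≤ (‖U ω‖ + |β| * ‖V ω‖) * ‖θ₁ - θ₂‖ * ‖U ω‖ := by
        gcongr
        exact abs_stoppingTD_sub_le β (U ω) (V ω) (g ω) θ₁ θ₂
      _ = (‖U ω‖ ^ 2 + |β| / 2 * (2 * ‖U ω‖ * ‖V ω‖)) * ‖θ₁ - θ₂‖ := by ring
      _ ≤ (‖U ω‖ ^ 2 + |β| / 2 * (‖U ω‖ ^ 2 + ‖V ω‖ ^ 2)) * ‖θ₁ - θ₂‖ := by
        gcongr
        exact two_mul_le_add_sq ‖U ω‖ ‖V ω‖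
      _ = ((1 + |β| / 2) * ‖U ω‖ ^ 2 + |β| / 2 * ‖V ω‖ ^ 2) * ‖θ₁ - θ₂‖ := by ring
  rw [stoppingMeanField, stoppingMeanField, ← integral_sub
    (integrable_stoppingTD_smul hU hV hg β θ₁) (integrable_stoppingTD_smul hU hV hg β θ₂)]
  calc ‖∫ ω, (stoppingTD β (U ω) (V ω) (g ω) θ₁ • U ω -
        stoppingTD β (U ω) (V ω) (g ω) θ₂ • U ω) ∂μ‖
    _ ≤ ∫ ω, ((1 + |β| / 2) * ‖U ω‖ ^ 2 + |β| / 2 * ‖V ω‖ ^ 2) * ‖θ₁ - θ₂‖ ∂μ :=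
      norm_integral_le_of_norm_le
        (((hU_sq.const_mul _).add (hV_sq.const_mul _)).mul_const _) (.of_forall h_pointwise)
    _ = (1 + |β|) * (∫ ω, ‖U ω‖ ^ 2 ∂μ) * ‖θ₁ - θ₂‖ := by
      rw [integral_mul_const, integral_add (hU_sq.const_mul _) (hV_sq.const_mul _),
        integral_const_mul, integral_const_mul, hUV]
      ring

end Hilbert

section Coordinates

variable {Ω : Type*} [MeasurableSpace Ω] {μ : Measure Ω}

theorem memLp_ite {F : Type*} [NormedAddCommGroup F] {q : ENNReal} {f : Ω → F} {p : Ω → Prop}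
    [DecidablePred p] (hp : NullMeasurableSet {ω | p ω} μ) (hf : MemLp f q μ) :
    MemLp (fun ω => if p ω then f ω else 0) q μ := by
  refine hf.of_le ?_ (.of_forall fun ω => ?_)
  · exact (hf.1.indicator₀ hp).congr (.of_forall fun ω => by simp [Set.indicator_apply])
  · split_ifs
    · rfl
    · exact norm_zero.trans_le (norm_nonneg _)

variable {ι : Type*} [Fintype ι] {U V : Ω → ι → ℝ} {g : Ω → ℝ}

theorem memLp_dotProduct_s9 {p : ENNReal} (hU : MemLp U p μ) (θ : ι → ℝ) :
    MemLp (fun ω => θ ⬝ᵥ U ω) p μ :=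
  memLp_finsetSum _ fun i _ => (hU.eval i).const_mul (θ i)

theorem integrable_stoppingMatrix_integrand (hU : MemLp U 2 μ) (hV : MemLp V 2 μ)
    (hg : AEMeasurable g μ) (β : ℝ) (θ : ι → ℝ) (i j : ι) :
    Integrable (fun ω => U ω i * (β * (if θ ⬝ᵥ V ω < g ω then V ω j else 0) - U ω j)) μ :=
  have h_continue : NullMeasurableSet {ω | θ ⬝ᵥ V ω < g ω} μ :=
    nullMeasurableSet_lt (memLp_dotProduct_s9 hV θ).1.aemeasurable hg
  (hU.eval i).integrable_mul (((memLp_ite h_continue (hV.eval j)).const_mul β).sub (hU.eval j))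

theorem integrable_stoppingCost_integrand (hU : MemLp U 2 μ) (hV : AEMeasurable V μ)
    (hg : MemLp g 2 μ) (θ : ι → ℝ) (i : ι) :
    Integrable (fun ω => U ω i * (if g ω ≤ θ ⬝ᵥ V ω then g ω else 0)) μ :=
  have h_stop : NullMeasurableSet {ω | g ω ≤ θ ⬝ᵥ V ω} μ :=
    nullMeasurableSet_le hg.1.aemeasurable (by unfold dotProduct; fun_prop)
  (hU.eval i).integrable_mul (memLp_ite h_stop hg)

/-- The matrix `A(θ) = 𝔼[U (β 𝟙{θᵀV < g} V - U)ᵀ]`, for current feature `U`, next feature `V` and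
next stopping cost `g`. -/
noncomputable def stoppingMatrix (μ : Measure Ω) (β : ℝ) (U V : Ω → ι → ℝ) (g : Ω → ℝ)
    (θ : ι → ℝ) : Matrix ι ι ℝ :=
  .of fun i j => ∫ ω, U ω i * (β * (if θ ⬝ᵥ V ω < g ω then V ω j else 0) - U ω j) ∂μ

/-- The vector `c̄_s(θ) = 𝔼[𝟙{g ≤ θᵀV} g U]` of mean costs of stopping, for current feature `U`,
next feature `V` and next stopping cost `g`. -/
noncomputable def stoppingCost (μ : Measure Ω) (U V : Ω → ι → ℝ) (g : Ω → ℝ) (θ : ι → ℝ) : ι → ℝ :=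
  fun i => ∫ ω, U ω i * (if g ω ≤ θ ⬝ᵥ V ω then g ω else 0) ∂μ

theorem stoppingTD_mul_eq (β : ℝ) (u v : ι → ℝ) (s : ℝ) (θ : ι → ℝ) (i : ι) :
    stoppingTD β (WithLp.toLp 2 u) (WithLp.toLp 2 v) s (WithLp.toLp 2 θ) * u i =
      -(∑ j, u i * (β * (if θ ⬝ᵥ v < s then v j else 0) - u j) * θ j) -
        β * (u i * (if s ≤ θ ⬝ᵥ v then s else 0)) := by
  have h_inner : ∀ w : ι → ℝ, inner ℝ (WithLp.toLp 2 θ) (WithLp.toLp 2 w) = θ ⬝ᵥ w := fun w => by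
    rw [EuclideanSpace.inner_toLp_toLp, star_trivial, dotProduct_comm]
  have h_sum : ∀ w : ι → ℝ, ∑ j, u i * (β * w j - u j) * θ j = u i * (β * θ ⬝ᵥ w - θ ⬝ᵥ u) :=
    fun w => by
      simp only [dotProduct, Finset.mul_sum, ← Finset.sum_sub_distrib]
      exact Finset.sum_congr rfl fun j _ => by ring
  rw [stoppingTD, h_inner, h_inner]
  rcases lt_or_ge (θ ⬝ᵥ v) s with h | h
  · simp only [if_pos h, if_neg h.not_ge, min_eq_right h.le, h_sum]
    ring
  · have h_zero := h_sum 0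
    simp only [Pi.zero_apply, dotProduct_zero] at h_zero
    simp only [if_neg h.not_gt, if_pos h, min_eq_left h, h_zero]
    ring

theorem stoppingMeanField_toLp (hU : MemLp U 2 μ) (hV : MemLp V 2 μ) (hg : MemLp g 2 μ)
    (β : ℝ) (θ : ι → ℝ) :
    stoppingMeanField μ β (fun ω => WithLp.toLp 2 (U ω)) (fun ω => WithLp.toLp 2 (V ω)) g
        (WithLp.toLp 2 θ) =
      WithLp.toLp 2 (-(stoppingMatrix μ β U V g θ *ᵥ θ) - β • stoppingCost μ U V g θ) := by
  have hA := integrable_stoppingMatrix_integrand hU hV hg.1.aemeasurable β θ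
  have hc := integrable_stoppingCost_integrand hU hV.1.aemeasurable hg θ
  have h_coord : Integrable (fun ω => stoppingTD β (WithLp.toLp 2 (U ω)) (WithLp.toLp 2 (V ω)) (g ω)
      (WithLp.toLp 2 θ) • WithLp.toLp 2 (U ω)) μ :=
    integrable_stoppingTD_smul (.of_eval_piLp hU.eval) (.of_eval_piLp hV.eval) hg β _
  have hA_sum : ∀ i, Integrable (fun ω => -∑ j,
      U ω i * (β * (if θ ⬝ᵥ V ω < g ω then V ω j else 0) - U ω j) * θ j) μ := fun i =>
    (integrable_finsetSum _ fun j _ => (hA i j).mul_const (θ j)).neg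
  ext i
  calc stoppingMeanField μ β (fun ω => WithLp.toLp 2 (U ω)) (fun ω => WithLp.toLp 2 (V ω)) g
        (WithLp.toLp 2 θ) i
    _ = ∫ ω, stoppingTD β (WithLp.toLp 2 (U ω)) (WithLp.toLp 2 (V ω)) (g ω) (WithLp.toLp 2 θ) *
          U ω i ∂μ := eval_integral_piLp h_coord.eval_piLp i
    _ = ∫ ω, (-(∑ j, U ω i * (β * (if θ ⬝ᵥ V ω < g ω then V ω j else 0) - U ω j) * θ j) -
          β * (U ω i * (if g ω ≤ θ ⬝ᵥ V ω then g ω else 0))) ∂μ := by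
      simp only [stoppingTD_mul_eq]
    _ = -(∑ j, stoppingMatrix μ β U V g θ i j * θ j) - β * stoppingCost μ U V g θ i := by
      rw [integral_sub (hA_sum i) ((hc i).const_mul β), integral_neg, integral_const_mul,
        integral_finsetSum _ fun j _ => (hA i j).mul_const (θ j)]
      simp only [integral_mul_const, stoppingMatrix, stoppingCost, Matrix.of_apply]

end Coordinates

section Chain

variable {X : Type*} [MeasurableSpace X] {P : Kernel X X} [IsMarkovKernel P]
  {π : Measure X} [SFinite π]

theorem measurePreserving_fst_compProd_s9 : MeasurePreserving Prod.fst (π ⊗ₘ P) π :=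
  ⟨measurable_fst, Measure.fst_compProd π P⟩

theorem measurePreserving_snd_compProd (hinv : P.Invariant π) :
    MeasurePreserving Prod.snd (π ⊗ₘ P) π :=
  ⟨measurable_snd, (Measure.snd_compProd π P).trans hinv⟩

theorem norm_stoppingMeanField_compProd_sub_le {E : Type*} [NormedAddCommGroup E]
    [InnerProductSpace ℝ E] (hinv : P.Invariant π) {ψ : X → E} (hψ : MemLp ψ 2 π) {cs : X → ℝ}
    (hcs : MemLp cs 2 π) (β : ℝ) (θ₁ θ₂ : E) :
    ‖stoppingMeanField (π ⊗ₘ P) β (fun z => ψ z.1) (fun z => ψ z.2) (fun z => cs z.2) θ₁ -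
        stoppingMeanField (π ⊗ₘ P) β (fun z => ψ z.1) (fun z => ψ z.2) (fun z => cs z.2) θ₂‖ ≤
      (1 + |β|) * (∫ x, ‖ψ x‖ ^ 2 ∂π) * ‖θ₁ - θ₂‖ := by
  have h_fst : MeasurePreserving Prod.fst (π ⊗ₘ P) π := measurePreserving_fst_compProd_s9
  have h_snd := measurePreserving_snd_compProd hinv
  have h_int : ∀ {φ : X × X → X}, MeasurePreserving φ (π ⊗ₘ P) π →
      ∫ z, ‖ψ (φ z)‖ ^ 2 ∂(π ⊗ₘ P) = ∫ x, ‖ψ x‖ ^ 2 ∂π := fun {φ} hφ => by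
    have h_meas : AEStronglyMeasurable (fun x => ‖ψ x‖ ^ 2) ((π ⊗ₘ P).map φ) :=
      hφ.map_eq.symm ▸ hψ.1.norm.pow 2
    rw [← integral_map hφ.measurable.aemeasurable h_meas, hφ.map_eq]
  rw [← h_int h_fst]
  exact norm_stoppingMeanField_sub_le (hψ.comp_measurePreserving h_fst)
    (hψ.comp_measurePreserving h_snd) (hcs.comp_measurePreserving h_snd)
    ((h_int h_snd).trans (h_int h_fst).symm) β θ₁ θ₂

end Chain

theorem euclNorm_eq_norm_toLp {d : ℕ} (v : Fin d → ℝ) : euclNorm v = ‖WithLp.toLp 2 v‖ := by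
  simp only [euclNorm, EuclideanSpace.norm_eq, Real.norm_eq_abs, sq_abs]

theorem memLp_of_euclNorm_le {X : Type*} [MeasurableSpace X] {π : Measure X} [IsFiniteMeasure π]
    {p : ENNReal} {d : ℕ} {ψ : X → Fin d → ℝ} (hψm : AEMeasurable ψ π) {C : ℝ}
    (hC : ∀ x, euclNorm (ψ x) ≤ C) : MemLp ψ p π :=
  have h_toLp : MemLp (fun x => WithLp.toLp 2 (ψ x)) p π :=
    .of_bound (by fun_prop) C
      (.of_forall fun x => (euclNorm_eq_norm_toLp (ψ x)).symm.trans_le (hC x))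
  .of_eval h_toLp.eval_piLp

theorem b_theta_lipschitz_general
    {X : Type*} [MeasurableSpace X] {d : ℕ}
    (P : Kernel X X) [IsMarkovKernel P]
    (π : Measure X) [SFinite π]
    (hinv : P.Invariant π)
    (β : ℝ)
    (cs : X → ℝ) (hcs2 : MemLp cs 2 π)
    (ψ : X → Fin d → ℝ) (hψ2 : MemLp ψ 2 π)
    (A : (Fin d → ℝ) → Matrix (Fin d) (Fin d) ℝ)
    (hA : ∀ θ i j, A θ i j =
      ∫ x, ∫ y, ψ x i * (β * (if θ ⬝ᵥ ψ y < cs y then ψ y j else 0) - ψ x j)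
        ∂(P x) ∂π)
    (cbar : (Fin d → ℝ) → Fin d → ℝ)
    (hcbar : ∀ θ i, cbar θ i =
      ∫ x, ∫ y, ψ x i * (if cs y ≤ θ ⬝ᵥ ψ y then cs y else 0) ∂(P x) ∂π)
    (b : (Fin d → ℝ) → Fin d → ℝ)
    (hbdef : ∀ θ, b θ = -(A θ *ᵥ θ) - β • cbar θ)
    (θ₁ θ₂ : Fin d → ℝ) :
    euclNorm (b θ₁ - b θ₂) ≤
      (1 + |β|) * (∫ x, euclNorm (ψ x) ^ 2 ∂π) * euclNorm (θ₁ - θ₂) := by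
  have hψ_fst : MemLp (fun z : X × X => ψ z.1) 2 (π ⊗ₘ P) :=
    hψ2.comp_measurePreserving measurePreserving_fst_compProd_s9
  have hψ_snd : MemLp (fun z : X × X => ψ z.2) 2 (π ⊗ₘ P) :=
    hψ2.comp_measurePreserving (measurePreserving_snd_compProd hinv)
  have hcs_snd : MemLp (fun z : X × X => cs z.2) 2 (π ⊗ₘ P) :=
    hcs2.comp_measurePreserving (measurePreserving_snd_compProd hinv)
  have hA_eq : ∀ θ, A θ =
      stoppingMatrix (π ⊗ₘ P) β (fun z => ψ z.1) (fun z => ψ z.2) (fun z => cs z.2) θ := fun θ => by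
    ext i j
    rw [hA, stoppingMatrix, Matrix.of_apply, Measure.integral_compProd <|
      integrable_stoppingMatrix_integrand hψ_fst hψ_snd hcs_snd.1.aemeasurable β θ i j]
  have hcbar_eq : ∀ θ, cbar θ =
      stoppingCost (π ⊗ₘ P) (fun z => ψ z.1) (fun z => ψ z.2) (fun z => cs z.2) θ := fun θ => by
    ext i
    rw [hcbar, stoppingCost, Measure.integral_compProd <|
      integrable_stoppingCost_integrand hψ_fst hψ_snd.1.aemeasurable hcs_snd θ i]
  have hb_eq : ∀ θ, WithLp.toLp 2 (b θ) = stoppingMeanField (π ⊗ₘ P) β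
      (fun z => WithLp.toLp 2 (ψ z.1)) (fun z => WithLp.toLp 2 (ψ z.2)) (fun z => cs z.2)
      (WithLp.toLp 2 θ) := fun θ => by
    rw [hbdef, hA_eq, hcbar_eq, stoppingMeanField_toLp hψ_fst hψ_snd hcs_snd]
  simp only [euclNorm_eq_norm_toLp, WithLp.toLp_sub, hb_eq]
  have hψ_toLp : MemLp (fun x => WithLp.toLp 2 (ψ x)) 2 π := .of_eval_piLp hψ2.eval
  exact norm_stoppingMeanField_compProd_sub_le hinv hψ_toLp hcs2 β _ _

/-- The map `θ ↦ b(θ) = −A(θ)θ − β c̄_s(θ)` is Lipschitz on `ℝ^d`: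
for all `θ¹, θ²`, `‖b(θ¹) − b(θ²)‖ ≤ (1 + β) (∫ ‖ψ(x)‖² π(dx)) ‖θ¹ − θ²‖`. -/
theorem b_theta_lipschitz
    {X : Type*} [MeasurableSpace X] {d : ℕ}
    (P : Kernel X X) [IsMarkovKernel P]
    (π : Measure X) [IsProbabilityMeasure π]
    (hinv : π.bind (fun x => P x) = π)
    (β : ℝ) (hβ : β ∈ Set.Ioo (0 : ℝ) 1)
    (c cs : X → ℝ) (hcm : Measurable c) (hcsm : Measurable cs)
    (hc2 : MemLp c 2 π) (hcs2 : MemLp cs 2 π)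
    (ψ : X → Fin d → ℝ) (hψm : Measurable ψ)
    (hψb : ∃ C : ℝ, ∀ x, euclNorm (ψ x) ≤ C)
    (A : (Fin d → ℝ) → Matrix (Fin d) (Fin d) ℝ)
    (hA : ∀ θ i j, A θ i j =
      ∫ x, ∫ y, ψ x i * (β * (if θ ⬝ᵥ ψ y < cs y then ψ y j else 0) - ψ x j)
        ∂(P x) ∂π)
    (cbar : (Fin d → ℝ) → Fin d → ℝ)
    (hcbar : ∀ θ i, cbar θ i =
      ∫ x, ∫ y, ψ x i * (if cs y ≤ θ ⬝ᵥ ψ y then cs y else 0) ∂(P x) ∂π)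
    (b : (Fin d → ℝ) → Fin d → ℝ)
    (hbdef : ∀ θ, b θ = -(A θ *ᵥ θ) - β • cbar θ)
    (θ₁ θ₂ : Fin d → ℝ) :
    euclNorm (b θ₁ - b θ₂) ≤
      (1 + β) * (∫ x, euclNorm (ψ x) ^ 2 ∂π) * euclNorm (θ₁ - θ₂) := by
  obtain ⟨C, hC⟩ := hψb
  simpa only [abs_of_pos hβ.1] using b_theta_lipschitz_general P π hinv β cs hcs2 ψ
    (memLp_of_euclNorm_le hψm.aemeasurable hC) A hA cbar hcbar b hbdef θ₁ θ₂
end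

section
/- For every R > 0 and every dimension d ≥ 1 there exists L < ∞ such that for all m ∈ ℝ^d with ‖m‖ ≤ R, the function g_m : ℝ^d → ℝ defined by g_m(θ) = N(⟨m,θ⟩, ‖θ‖²)((−∞, 1]) — the probability that a real Gaussian random variable with mean ⟨m,θ⟩ and variance ‖θ‖² is at most 1 (interpreted as 𝟙{⟨m,θ⟩ ≤ 1} when θ = 0) — is L-Lipschitz: |g_m(θ¹) − g_m(θ²)| ≤ L ‖θ¹ − θ²‖ for all θ¹, θ² ∈ ℝ^d. Equivalently, if Z is a Gaussian vector in ℝ^d with mean m and identity covariance, then θ ↦ Pr(⟨Z,θ⟩ ≤ 1) is L-Lipschitz, with L depending only on R and d. -/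
open MeasureTheory ProbabilityTheory

/-!
For `s > 0` the law `N(μ, s²)` gives `(-∞, c]` the mass `Φ(u)` with `u = (c - μ) / s`, where `Φ` is
the standard Gaussian distribution function, with density `φ`. The partial derivatives `-φ(u) / s`
and `-u φ(u) / s` of this mass in `μ` and `s` are bounded on the convex cone `|μ| ≤ R s`, which
contains `(⟪m, θ⟫, ‖θ‖)` whenever `‖m‖ ≤ R`: there `|c| / s ≤ |u| + R`, and `φ` absorbs the
resulting polynomial in `u`. The mass is therefore Lipschitz on the cone without its apex, and the
bound passes to the apex by replacing `(μ, s)` with `(μ, s + ε)`: this stays in the cone, does not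
change differences of points, and the mass converges as `ε → 0` because `c ≠ 0`.
-/

open Filter Set Topology

lemma gaussianPDFReal_mul_one_add_le (μ : ℝ) (v : NNReal) (x : ℝ) :
    gaussianPDFReal μ v x * (1 + (x - μ) ^ 2 / (2 * v)) ≤ (√(2 * Real.pi * v))⁻¹ := by
  set q := (x - μ) ^ 2 / (2 * v) with hq
  have h_exp : Real.exp (-q) * (1 + q) ≤ 1 := by
    calc Real.exp (-q) * (1 + q) ≤ Real.exp (-q) * Real.exp q := by
          gcongr
          linarith [Real.add_one_le_exp q]
      _ = 1 := by rw [← Real.exp_add, neg_add_cancel, Real.exp_zero]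
  rw [gaussianPDFReal, neg_div, ← hq, mul_assoc]
  exact mul_le_of_le_one_right (by positivity) h_exp

lemma gaussianPDFReal_zero_one_mul_le {x y C : ℝ} (hC : 0 ≤ C) (hy : y ≤ C * (1 + x ^ 2 / 2)) :
    gaussianPDFReal 0 1 x * y ≤ C := by
  have h_std : gaussianPDFReal 0 1 x * (1 + x ^ 2 / 2) ≤ 1 := by
    have h_inv : (√(2 * Real.pi))⁻¹ ≤ 1 :=
      inv_le_one_of_one_le₀ (Real.one_le_sqrt.2 (by linarith [Real.pi_gt_three]))
    simpa using (gaussianPDFReal_mul_one_add_le 0 1 x).trans (by simpa using h_inv)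
  calc gaussianPDFReal 0 1 x * y
      ≤ gaussianPDFReal 0 1 x * (C * (1 + x ^ 2 / 2)) :=
        mul_le_mul_of_nonneg_left hy (gaussianPDFReal_nonneg 0 1 x)
    _ = C * (gaussianPDFReal 0 1 x * (1 + x ^ 2 / 2)) := by ring
    _ ≤ C := mul_le_of_le_one_right hC h_std

lemma hasDerivAt_cdf_gaussianReal (μ : ℝ) {v : NNReal} (hv : v ≠ 0) (x : ℝ) :
    HasDerivAt (cdf (gaussianReal μ v)) (gaussianPDFReal μ v x) x := by
  have h_int : Integrable (gaussianPDFReal μ v) := integrable_gaussianPDFReal μ v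
  have h_cont : Continuous (gaussianPDFReal μ v) := by
    rw [gaussianPDFReal_def]
    fun_prop
  have h_cdf (y : ℝ) : cdf (gaussianReal μ v) y = ∫ z in Iic y, gaussianPDFReal μ v z := by
    rw [cdf_eq_real, measureReal_def, gaussianReal_apply_eq_integral μ hv,
      ENNReal.toReal_ofReal (integral_nonneg (gaussianPDFReal_nonneg μ v))]
  have h_eq : ⇑(cdf (gaussianReal μ v)) =
      fun y ↦ cdf (gaussianReal μ v) 0 + ∫ z in 0..y, gaussianPDFReal μ v z := by
    ext y
    rw [h_cdf, h_cdf, ← intervalIntegral.integral_Iic_sub_Iic h_int.integrableOn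
      h_int.integrableOn, add_sub_cancel]
  rw [h_eq]
  exact (h_cont.integral_hasStrictDerivAt 0 x).hasDerivAt.const_add _

lemma gaussianReal_sq_real_Iic_eq_cdf (μ c : ℝ) {s : NNReal} (hs : s ≠ 0) :
    (gaussianReal μ (s ^ 2)).real (Iic c) = cdf (gaussianReal 0 1) ((c - μ) / s) := by
  have hs_pos : (0 : ℝ) < s := by positivity
  have h_std : (gaussianReal μ (s ^ 2)).map (fun x ↦ (x - μ) / s) = gaussianReal 0 1 := by
    rw [← Function.comp_def (· / (s : ℝ)) (· - μ), ← Measure.map_map (by fun_prop) (by fun_prop),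
      gaussianReal_map_sub_const, gaussianReal_map_div_const]
    congr 1
    · simp
    · ext
      simp [hs]
  rw [cdf_eq_real, ← h_std, map_measureReal_apply (by fun_prop) measurableSet_Iic]
  congr 1
  ext x
  simp [div_le_div_iff_of_pos_right hs_pos]

lemma tendsto_cdf_gaussianReal_div_add {μ c : ℝ} {s : NNReal} (h : s = 0 → μ ≠ c) :
    Tendsto (fun ε : ℝ ↦ cdf (gaussianReal 0 1) ((c - μ) / (s + ε))) (𝓝[>] 0)
      (𝓝 ((gaussianReal μ (s ^ 2)).real (Iic c))) := by
  rcases eq_or_ne s 0 with rfl | hs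
  · simp only [NNReal.coe_zero, zero_add, div_eq_mul_inv, ne_eq, OfNat.ofNat_ne_zero,
      not_false_eq_true, zero_pow, gaussianReal_zero_var]
    rcases (h rfl).lt_or_gt with hμ | hμ
    · simpa [Function.comp_def, measureReal_def, hμ.le] using
        (tendsto_cdf_atTop (gaussianReal 0 1)).comp
          (tendsto_inv_nhdsGT_zero.const_mul_atTop (sub_pos.2 hμ))
    · simpa [Function.comp_def, measureReal_def, hμ.not_ge] using
        (tendsto_cdf_atBot (gaussianReal 0 1)).comp
          (tendsto_inv_nhdsGT_zero.const_mul_atTop_of_neg (sub_neg.2 hμ))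
  · have hs_ne : (s : ℝ) + 0 ≠ 0 := by simpa using hs
    have h_div : Tendsto (fun ε : ℝ ↦ (c - μ) / (s + ε)) (𝓝 0) (𝓝 ((c - μ) / (s + 0))) :=
      ContinuousAt.tendsto (by fun_prop (disch := exact hs_ne))
    have h_cdf := (hasDerivAt_cdf_gaussianReal 0 one_ne_zero ((c - μ) / (s + 0))).continuousAt
    rw [gaussianReal_sq_real_Iic_eq_cdf μ c hs]
    simpa [Function.comp_def] using (h_cdf.tendsto.comp h_div).mono_left nhdsWithin_le_nhds

lemma hasDerivAt_cdf_gaussianReal_sub_div (c : ℝ) {μ s : ℝ → ℝ} {a b t : ℝ}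
    (hμ : HasDerivAt μ a t) (hs : HasDerivAt s b t) (hst : s t ≠ 0) :
    HasDerivAt (fun t ↦ cdf (gaussianReal 0 1) ((c - μ t) / s t))
      (-(gaussianPDFReal 0 1 ((c - μ t) / s t) * ((a + (c - μ t) / s t * b) / s t))) t := by
  convert! (hasDerivAt_cdf_gaussianReal 0 one_ne_zero _).comp t
    ((hμ.const_sub c).div hs hst) using 1
  simp only [Pi.div_apply]
  field_simp
  ring

lemma convex_norm_le_mul {F : Type*} [SeminormedAddCommGroup F] [NormedSpace ℝ F] (R : ℝ) :
    Convex ℝ {p : ℝ × F | 0 < p.1 ∧ ‖p.2‖ ≤ R * p.1} := by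
  rintro ⟨s₁, x₁⟩ ⟨hs₁, hx₁⟩ ⟨s₂, x₂⟩ ⟨hs₂, hx₂⟩ a b ha hb hab
  refine ⟨convex_Ioi (0 : ℝ) hs₁ hs₂ ha hb hab, ?_⟩
  calc ‖a • x₁ + b • x₂‖ ≤ a * ‖x₁‖ + b * ‖x₂‖ := by
        simpa [norm_smul, abs_of_nonneg, ha, hb] using norm_add_le (a • x₁) (b • x₂)
    _ ≤ a * (R * s₁) + b * (R * s₂) := by gcongr
    _ = R * (a * s₁ + b * s₂) := by ring

lemma gaussianPDFReal_sub_div_mul_abs_le {R c μ s : ℝ} (a b : ℝ) (hs : 0 < s)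
    (hμ : |μ| ≤ R * s) :
    gaussianPDFReal 0 1 ((c - μ) / s) * (|c| * |a + (c - μ) / s * b|) ≤
      ((1 + R) * |a| + (2 + R) * |b|) * s := by
  set u := (c - μ) / s with hu
  have hR : 0 ≤ R := nonneg_of_mul_nonneg_left ((abs_nonneg μ).trans hμ) hs
  have hc : |c| ≤ (|u| + R) * s := by
    have h_eq : c = u * s + μ := by rw [hu, div_mul_cancel₀ _ hs.ne', sub_add_cancel]
    calc |c| ≤ |u * s| + |μ| := by rw [h_eq]; exact abs_add_le _ _
      _ ≤ (|u| + R) * s := by rw [abs_mul, abs_of_pos hs]; linarith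
  have hu_abs : |u| ≤ 1 + u ^ 2 / 2 := by nlinarith [sq_nonneg (|u| - 1), sq_abs u]
  apply gaussianPDFReal_zero_one_mul_le (by positivity)
  calc |c| * |a + u * b|
      ≤ (|u| + R) * s * (|a| + |u| * |b|) := by
        gcongr
        exact (abs_add_le _ _).trans_eq (by rw [abs_mul])
    _ = ((|u| + R) * |a| + (u ^ 2 + R * |u|) * |b|) * s := by rw [← sq_abs u]; ring
    _ ≤ ((1 + R) * (1 + u ^ 2 / 2) * |a| + (2 + R) * (1 + u ^ 2 / 2) * |b|) * s := by
        gcongr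
        · nlinarith [mul_nonneg hR (sq_nonneg u)]
        · nlinarith [mul_le_mul_of_nonneg_left hu_abs hR]
    _ = ((1 + R) * |a| + (2 + R) * |b|) * s * (1 + u ^ 2 / 2) := by ring

lemma abs_cdf_gaussianReal_div_sub_le {R c μ₁ μ₂ s₁ s₂ : ℝ} (hc : c ≠ 0)
    (hs₁ : 0 < s₁) (hs₂ : 0 < s₂) (hμ₁ : |μ₁| ≤ R * s₁) (hμ₂ : |μ₂| ≤ R * s₂) :
    |cdf (gaussianReal 0 1) ((c - μ₁) / s₁) - cdf (gaussianReal 0 1) ((c - μ₂) / s₂)| ≤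
      ((1 + R) * |μ₁ - μ₂| + (2 + R) * |s₁ - s₂|) / |c| := by
  let μ (t : ℝ) : ℝ := μ₂ + t * (μ₁ - μ₂)
  let s (t : ℝ) : ℝ := s₂ + t * (s₁ - s₂)
  have hμ (t : ℝ) : HasDerivAt μ (μ₁ - μ₂) t := (hasDerivAt_mul_const (μ₁ - μ₂)).const_add μ₂
  have hs (t : ℝ) : HasDerivAt s (s₁ - s₂) t := (hasDerivAt_mul_const (s₁ - s₂)).const_add s₂
  have h_cone {t : ℝ} (ht : t ∈ Icc (0 : ℝ) 1) : 0 < s t ∧ |μ t| ≤ R * s t :=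
    (convex_norm_le_mul (F := ℝ) R).add_smul_sub_mem (x := (s₂, μ₂)) (y := (s₁, μ₁))
      ⟨hs₂, hμ₂⟩ ⟨hs₁, hμ₁⟩ ht
  let u (t : ℝ) : ℝ := (c - μ t) / s t
  have h_bound {t : ℝ} (ht : t ∈ Icc (0 : ℝ) 1) :
      ‖-(gaussianPDFReal 0 1 (u t) * ((μ₁ - μ₂ + u t * (s₁ - s₂)) / s t))‖ ≤
        ((1 + R) * |μ₁ - μ₂| + (2 + R) * |s₁ - s₂|) / |c| := by
    obtain ⟨hs_pos, hμ_le⟩ := h_cone ht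
    rw [norm_neg, Real.norm_eq_abs, abs_mul, abs_div, abs_of_pos hs_pos,
      abs_of_nonneg (gaussianPDFReal_nonneg 0 1 _), ← mul_div_assoc,
      div_le_div_iff₀ hs_pos (abs_pos.2 hc), mul_assoc, mul_comm _ |c|]
    exact gaussianPDFReal_sub_div_mul_abs_le _ _ hs_pos hμ_le
  have h_mvt := norm_image_sub_le_of_norm_deriv_le_segment_01'
    (fun t ht ↦ (hasDerivAt_cdf_gaussianReal_sub_div c (hμ t) (hs t)
      (h_cone ht).1.ne').hasDerivWithinAt)
    (fun t ht ↦ h_bound (Ico_subset_Icc_self ht))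
  simpa [μ, s] using h_mvt

lemma abs_gaussianReal_sq_real_Iic_sub_le {R c μ₁ μ₂ : ℝ} {s₁ s₂ : NNReal} (hR : 0 ≤ R)
    (hc : c ≠ 0) (hμ₁ : |μ₁| ≤ R * s₁) (hμ₂ : |μ₂| ≤ R * s₂) :
    |(gaussianReal μ₁ (s₁ ^ 2)).real (Iic c) - (gaussianReal μ₂ (s₂ ^ 2)).real (Iic c)| ≤
      ((1 + R) * |μ₁ - μ₂| + (2 + R) * |(s₁ : ℝ) - s₂|) / |c| := by
  have h_apex {μ : ℝ} {s : NNReal} (hμ : |μ| ≤ R * s) (hs : s = 0) : μ ≠ c := by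
    have hμ₀ : μ = 0 := by simpa [hs] using hμ
    exact hμ₀ ▸ hc.symm
  refine le_of_tendsto ((tendsto_cdf_gaussianReal_div_add (h_apex hμ₁)).sub
    (tendsto_cdf_gaussianReal_div_add (h_apex hμ₂))).abs ?_
  filter_upwards [self_mem_nhdsWithin] with ε hε
  have hε_pos : 0 < ε := hε
  have h_mono (s : NNReal) : R * s ≤ R * (s + ε) := by gcongr; linarith
  simpa using abs_cdf_gaussianReal_div_sub_le hc (by positivity) (by positivity)
    (hμ₁.trans (h_mono s₁)) (hμ₂.trans (h_mono s₂))

theorem gaussian_halfspace_prob_lipschitz_general {E : Type*} [SeminormedAddCommGroup E]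
    [InnerProductSpace ℝ E] {c : ℝ} (hc : c ≠ 0) (m θ₁ θ₂ : E) :
    |(gaussianReal (inner ℝ m θ₁ : ℝ) (‖θ₁‖₊ ^ 2) (Iic c)).toReal -
        (gaussianReal (inner ℝ m θ₂ : ℝ) (‖θ₂‖₊ ^ 2) (Iic c)).toReal| ≤
      (‖m‖ ^ 2 + 2 * ‖m‖ + 2) / |c| * ‖θ₁ - θ₂‖ := by
  have h_inner : |inner ℝ m θ₁ - inner ℝ m θ₂| ≤ ‖m‖ * ‖θ₁ - θ₂‖ := by
    rw [← inner_sub_right]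
    exact abs_real_inner_le_norm m (θ₁ - θ₂)
  calc |(gaussianReal (inner ℝ m θ₁ : ℝ) (‖θ₁‖₊ ^ 2)).real (Iic c) -
          (gaussianReal (inner ℝ m θ₂ : ℝ) (‖θ₂‖₊ ^ 2)).real (Iic c)|
      ≤ ((1 + ‖m‖) * |inner ℝ m θ₁ - inner ℝ m θ₂| + (2 + ‖m‖) * |‖θ₁‖ - ‖θ₂‖|) / |c| :=
        abs_gaussianReal_sq_real_Iic_sub_le (norm_nonneg m) hc
          (abs_real_inner_le_norm m θ₁) (abs_real_inner_le_norm m θ₂)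
    _ ≤ ((1 + ‖m‖) * (‖m‖ * ‖θ₁ - θ₂‖) + (2 + ‖m‖) * ‖θ₁ - θ₂‖) / |c| := by
        gcongr
        exact abs_norm_sub_norm_le θ₁ θ₂
    _ = (‖m‖ ^ 2 + 2 * ‖m‖ + 2) / |c| * ‖θ₁ - θ₂‖ := by ring

/-- For every `R > 0` and every dimension `d ≥ 1` there exists
`L < ∞` such that for all `m ∈ ℝ^d` with `‖m‖ ≤ R`, the function
`g_m(θ) = N(⟨m,θ⟩, ‖θ‖²)((−∞, 1])` — the probability that a real Gaussian with
mean `⟨m,θ⟩` and variance `‖θ‖²` is at most `1` (the Dirac case when `θ = 0`) —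
is `L`-Lipschitz in `θ`.  Equivalently, for a Gaussian vector `Z` with mean `m`
and identity covariance, `θ ↦ Pr(⟨Z,θ⟩ ≤ 1)` is `L`-Lipschitz with `L`
depending only on `R` and `d`. -/
theorem gaussian_halfspace_prob_lipschitz
    (d : ℕ) (hd : 1 ≤ d) (R : ℝ) (hR : 0 < R) :
    ∃ L : ℝ, ∀ m : EuclideanSpace ℝ (Fin d), ‖m‖ ≤ R →
      ∀ θ₁ θ₂ : EuclideanSpace ℝ (Fin d),
        |(gaussianReal (inner ℝ m θ₁ : ℝ) (‖θ₁‖₊ ^ 2) (Set.Iic 1)).toReal -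
            (gaussianReal (inner ℝ m θ₂ : ℝ) (‖θ₂‖₊ ^ 2) (Set.Iic 1)).toReal| ≤
          L * ‖θ₁ - θ₂‖ := by
  refine ⟨R ^ 2 + 2 * R + 2, fun m hm θ₁ θ₂ ↦
    (gaussian_halfspace_prob_lipschitz_general one_ne_zero m θ₁ θ₂).trans ?_⟩
  rw [abs_one, div_one]
  gcongr
end

section
/- Let μ be a finite measure on X and suppose c_s and ‖ψ‖ are μ-integrable. Define g : ℝ^d → ℝ by g(θ) = ∫ min(c_s(y), ⟨θ, ψ(y)⟩) μ(dy). Then g is concave, and for every θ ∈ ℝ^d the vector v(θ) = ∫ 𝟙{⟨θ, ψ(y)⟩ < c_s(y)} ψ(y) μ(dy) is a supergradient of g at θ: g(θ′) ≤ g(θ) + ⟨v(θ), θ′ − θ⟩ for all θ′ ∈ ℝ^d. -/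
open MeasureTheory Matrix

/-! Truncating a linear functional from above by a constant keeps it as a supergradient wherever the
truncation is inactive, and makes `0` one elsewhere. Supergradient inequalities can be integrated,
and a function with a supergradient at every point is concave. -/

section Supergradient

variable {𝕜 E β : Type*} [Ring 𝕜] [AddCommGroup E] [Module 𝕜 E] [AddCommGroup β]
  [Module 𝕜 β]

/-- The linear map `ℓ` is a supergradient on `s` of `f` at `x`: the affine map through `(x, f x)`
with linear part `ℓ` dominates `f` on `s`. Supergradients are linear maps rather than vectors, so
that no inner product is involved; `x` itself need not lie in `s`. -/
def IsSupergradientOn [LE β] (f : E → β) (s : Set E) (ℓ : E →ₗ[𝕜] β) (x : E) : Prop :=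
  ∀ ⦃z⦄, z ∈ s → f z ≤ f x + ℓ (z - x)

lemma isSupergradientOn_linearMap [Preorder β] (ℓ : E →ₗ[𝕜] β) (s : Set E) (x : E) :
    IsSupergradientOn ℓ s ℓ x :=
  fun z _ ↦ by rw [map_sub, add_sub_cancel]

lemma IsSupergradientOn.min_const [LinearOrder β] {f : E → β} {s : Set E} {ℓ : E →ₗ[𝕜] β} {x : E}
    (hf : IsSupergradientOn f s ℓ x) (c : β) :
    IsSupergradientOn (fun z ↦ min c (f z)) s (if f x < c then ℓ else 0) x := by
  intro z hz
  dsimp only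
  split_ifs with h
  · rw [min_eq_right h.le]
    exact (min_le_right _ _).trans (hf hz)
  · rw [min_eq_left (not_lt.mp h), LinearMap.zero_apply, add_zero]
    exact min_le_left _ _

lemma concaveOn_of_forall_exists_isSupergradientOn [PartialOrder 𝕜] [PartialOrder β]
    [IsOrderedAddMonoid β] [PosSMulMono 𝕜 β] {f : E → β} {s : Set E} (hs : Convex 𝕜 s)
    (hf : ∀ x ∈ s, ∃ ℓ : E →ₗ[𝕜] β, IsSupergradientOn f s ℓ x) : ConcaveOn 𝕜 s f := by
  refine ⟨hs, fun x hx y hy a b ha hb hab ↦ ?_⟩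
  set z := a • x + b • y
  obtain ⟨ℓ, hℓ⟩ := hf z (hs hx hy ha hb hab)
  have barycenter : a • (x - z) + b • (y - z) = 0 := by
    rw [smul_sub, smul_sub, sub_add_sub_comm, ← add_smul, hab, one_smul, sub_self]
  calc a • f x + b • f y
      ≤ a • (f z + ℓ (x - z)) + b • (f z + ℓ (y - z)) := by gcongr <;> exact hℓ ‹_›
    _ = (a + b) • f z + ℓ (a • (x - z) + b • (y - z)) := by
        rw [map_add, map_smul, map_smul, smul_add, smul_add, add_smul, add_add_add_comm]
    _ = f z := by rw [barycenter, map_zero, hab, one_smul, add_zero]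

end Supergradient

section Integral

variable {X : Type*} [MeasurableSpace X] {μ : Measure X}

lemma IsSupergradientOn.integral {E : Type*} [AddCommGroup E] [Module ℝ E] {F : X → E → ℝ}
    {s : Set E} {ℓ : X → E →ₗ[ℝ] ℝ} {L : E →ₗ[ℝ] ℝ} {x : E}
    (hF : ∀ᵐ y ∂μ, IsSupergradientOn (F y) s (ℓ y) x)
    (hFx : Integrable (F · x) μ) (hFs : ∀ z ∈ s, Integrable (F · z) μ)
    (hℓ : ∀ h, Integrable (ℓ · h) μ) (hL : ∀ h, L h = ∫ y, ℓ y h ∂μ) :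
    IsSupergradientOn (fun z ↦ ∫ y, F y z ∂μ) s L x := fun z hz ↦
  calc ∫ y, F y z ∂μ
      ≤ ∫ y, (F y x + ℓ y (z - x)) ∂μ :=
        integral_mono_ae (hFs z hz) (hFx.add (hℓ _)) (hF.mono fun _ hy ↦ hy hz)
    _ = ∫ y, F y x ∂μ + L (z - x) := by rw [integral_add hFx (hℓ _), hL]

lemma integrable_min_of_integrable_negPart {c f : X → ℝ} (hc : AEStronglyMeasurable c μ)
    (hc_neg : Integrable (fun y ↦ (c y)⁻) μ) (hf : Integrable f μ) :
    Integrable (fun y ↦ min (c y) (f y)) μ := by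
  have abs_min_le (y : X) : |min (c y) (f y)| ≤ (c y)⁻ + |f y| := by
    have neg_negPart_le : -(c y)⁻ ≤ c y := neg_le.mp (neg_le_negPart _)
    have nonneg : 0 ≤ (c y)⁻ := negPart_nonneg _
    refine abs_le.mpr ⟨le_min ?_ ?_, (min_le_right _ _).trans ?_⟩
    · linarith [abs_nonneg (f y)]
    · linarith [neg_abs_le (f y)]
    · linarith [le_abs_self (f y)]
  exact (hc_neg.add hf.abs).mono' (hc.inf hf.aestronglyMeasurable) (.of_forall abs_min_le)

lemma integrable_ite {E : Type*} [NormedAddCommGroup E] {p : X → Prop} [DecidablePred p]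
    (hp : NullMeasurableSet {y | p y} μ) {f : X → E} (hf : Integrable f μ) :
    Integrable (fun y ↦ if p y then f y else 0) μ := by
  refine (hf.indicator₀ hp).congr (.of_forall fun y ↦ ?_)
  rw [Set.indicator_apply]
  rfl

theorem min_integral_concave_supergradient_general {E : Type*} [AddCommGroup E] [Module ℝ E]
    {φ : X → E →ₗ[ℝ] ℝ} (hφ : ∀ θ, Integrable (φ · θ) μ)
    {c : X → ℝ} (hc : AEStronglyMeasurable c μ) (hc_neg : Integrable (fun y ↦ (c y)⁻) μ)
    {g : E → ℝ} (hg : ∀ θ, g θ = ∫ y, min (c y) (φ y θ) ∂μ)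
    {v : E → E →ₗ[ℝ] ℝ} (hv : ∀ θ h, v θ h = ∫ y, if φ y θ < c y then φ y h else 0 ∂μ) :
    ConcaveOn ℝ Set.univ g ∧ ∀ θ θ', g θ' ≤ g θ + v θ (θ' - θ) := by
  have integrable_min (θ : E) : Integrable (fun y ↦ min (c y) (φ y θ)) μ :=
    integrable_min_of_integrable_negPart hc hc_neg (hφ θ)
  have truncation_apply (θ h : E) (y : X) :
      (if φ y θ < c y then φ y else 0) h = if φ y θ < c y then φ y h else 0 :=
    apply_ite (fun ℓ : E →ₗ[ℝ] ℝ ↦ ℓ h) _ _ _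
  have supergradient (θ : E) : IsSupergradientOn g Set.univ (v θ) θ := by
    obtain rfl : g = _ := funext hg
    refine .integral (.of_forall fun y ↦ (isSupergradientOn_linearMap (φ y) _ θ).min_const (c y))
      (integrable_min θ) (fun z _ ↦ integrable_min z) (fun h ↦ ?_) (fun h ↦ ?_)
    · simp only [truncation_apply]
      exact integrable_ite ((hφ θ).aestronglyMeasurable.nullMeasurableSet_lt hc) (hφ h)
    · simp only [truncation_apply, hv]
  exact ⟨concaveOn_of_forall_exists_isSupergradientOn convex_univ fun θ _ ↦ ⟨v θ, supergradient θ⟩,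
    fun θ θ' ↦ supergradient θ (Set.mem_univ θ')⟩

end Integral

section DotProduct

variable {X : Type*} [MeasurableSpace X] {μ : Measure X}

lemma norm_le_euclNorm {d : ℕ} (w : Fin d → ℝ) : ‖w‖ ≤ euclNorm w :=
  (pi_norm_le_iff_of_nonneg (Real.sqrt_nonneg _)).mpr fun i ↦
    Real.abs_le_sqrt (Finset.single_le_sum (f := fun j ↦ w j ^ 2) (fun _ _ ↦ sq_nonneg _)
      (Finset.mem_univ i))

lemma integrable_of_integrable_euclNorm {d : ℕ} {f : X → Fin d → ℝ}
    (hf : AEStronglyMeasurable f μ) (hf_norm : Integrable (fun y ↦ euclNorm (f y)) μ) :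
    Integrable f μ :=
  hf_norm.mono' hf (.of_forall fun y ↦ norm_le_euclNorm (f y))

variable {ι : Type*} [Fintype ι] {f : X → ι → ℝ}

lemma integrable_dotProduct (hf : Integrable f μ) (w : ι → ℝ) :
    Integrable (fun y ↦ w ⬝ᵥ f y) μ :=
  integrable_finsetSum _ fun i _ ↦ (hf.eval i).const_mul (w i)

lemma dotProduct_integral (hf : Integrable f μ) (w : ι → ℝ) :
    w ⬝ᵥ ∫ y, f y ∂μ = ∫ y, w ⬝ᵥ f y ∂μ :=
  ((dotProductBilin ℝ ℝ w).toContinuousLinearMap.integral_comp_comm hf).symm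

lemma dotProduct_integral_ite {p : X → Prop} [DecidablePred p]
    (hp : NullMeasurableSet {y | p y} μ) (hf : Integrable f μ) (w : ι → ℝ) :
    w ⬝ᵥ (fun i ↦ ∫ y, if p y then f y i else 0 ∂μ) = ∫ y, if p y then w ⬝ᵥ f y else 0 ∂μ := by
  have h_ite : Integrable (fun y ↦ if p y then f y else 0) μ := integrable_ite hp hf
  calc w ⬝ᵥ (fun i ↦ ∫ y, if p y then f y i else 0 ∂μ)
      = w ⬝ᵥ ∫ y, if p y then f y else 0 ∂μ := by
        congr 1 with i
        rw [eval_integral h_ite.eval]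
        simp only [ite_apply, Pi.zero_apply]
    _ = ∫ y, if p y then w ⬝ᵥ f y else 0 ∂μ := by
        rw [dotProduct_integral h_ite]
        simp only [apply_ite (w ⬝ᵥ ·), dotProduct_zero]

end DotProduct

/-- Let `μ` be a finite measure with `c_s` and `‖ψ‖` integrable.
Define `g(θ) = ∫ min(c_s(y), ⟨θ, ψ(y)⟩) μ(dy)`.  Then `g` is concave, and
`v(θ) = ∫ 𝟙{⟨θ, ψ(y)⟩ < c_s(y)} ψ(y) μ(dy)` is a supergradient of `g` at `θ`:
`g(θ′) ≤ g(θ) + ⟨v(θ), θ′ − θ⟩` for all `θ′`. -/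
theorem min_integral_concave_supergradient
    {X : Type*} [MeasurableSpace X] {d : ℕ}
    (μ : Measure X) [IsFiniteMeasure μ]
    (ψ : X → Fin d → ℝ) (hψm : Measurable ψ)
    (cs : X → ℝ) (hcsm : Measurable cs)
    (hψint : Integrable (fun y => euclNorm (ψ y)) μ)
    (hcsint : Integrable cs μ)
    (g : (Fin d → ℝ) → ℝ)
    (hg : ∀ θ, g θ = ∫ y, min (cs y) (θ ⬝ᵥ ψ y) ∂μ)
    (v : (Fin d → ℝ) → Fin d → ℝ)
    (hv : ∀ θ i, v θ i = ∫ y, (if θ ⬝ᵥ ψ y < cs y then ψ y i else 0) ∂μ) :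
    ConcaveOn ℝ Set.univ g ∧
    ∀ θ θ' : Fin d → ℝ, g θ' ≤ g θ + v θ ⬝ᵥ (θ' - θ) := by
  have hψ : Integrable ψ μ := integrable_of_integrable_euclNorm hψm.aestronglyMeasurable hψint
  have hdot := integrable_dotProduct hψ
  have v_dotProduct (θ h : Fin d → ℝ) :
      v θ ⬝ᵥ h = ∫ y, if θ ⬝ᵥ ψ y < cs y then h ⬝ᵥ ψ y else 0 ∂μ := by
    rw [dotProduct_comm, funext (hv θ), dotProduct_integral_ite _ hψ]
    exact (hdot θ).aestronglyMeasurable.nullMeasurableSet_lt hcsm.aestronglyMeasurable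
  exact min_integral_concave_supergradient_general
    (φ := fun y ↦ (dotProductBilin ℝ ℝ).flip (ψ y)) (v := fun θ ↦ dotProductBilin ℝ ℝ (v θ))
    hdot hcsint.aestronglyMeasurable hcsint.neg_part hg v_dotProduct
end

section
/- Suppose π is invariant under P, each component of ψ is in L²(π), and for every x ∈ X the image of P(x,·) under ψ : X → ℝ^d is absolutely continuous with respect to Lebesgue measure on ℝ^d. Then the covariance matrix Σ_ψ = ∫ ψ(x) ψ(x)ᵀ π(dx) is positive definite. -/
open MeasureTheory ProbabilityTheory Matrix

/-!
The matrix `Σ_ψ` is the Gram matrix of the components of `ψ` in `L²(π)`, so it is positive definite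
as soon as these components are linearly independent. A linear relation between them says that `ψ`
lies `π`-almost everywhere in a hyperplane. Hyperplanes are Lebesgue-null, while the law of `ψ`
under `π = πP` is a mixture of the absolutely continuous laws of `ψ` under `P(x, ·)`.
-/

section Lp

variable {X E ι 𝕜 : Type*} [MeasurableSpace X] {μ : Measure X} [NormedAddCommGroup E]

lemma inner_memLp_toLp [RCLike 𝕜] [InnerProductSpace 𝕜 E] {f g : X → E}
    (hf : MemLp f 2 μ) (hg : MemLp g 2 μ) :
    inner 𝕜 (hf.toLp f) (hg.toLp g) = ∫ x, inner 𝕜 (f x) (g x) ∂μ := by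
  rw [L2.inner_def]
  refine integral_congr_ae ?_
  filter_upwards [hf.coeFn_toLp, hg.coeFn_toLp] with x hfx hgx
  rw [hfx, hgx]

lemma sum_smul_toLp_eq_zero_iff [Fintype ι] [NormedRing 𝕜] [Module 𝕜 E] [IsBoundedSMul 𝕜 E]
    {p : ENNReal} {f : ι → X → E} (hf : ∀ i, MemLp (f i) p μ) (c : ι → 𝕜) :
    ∑ i, c i • (hf i).toLp (f i) = 0 ↔ ∀ᵐ x ∂μ, ∑ i, c i • f i x = 0 := by
  have coeFn_sum : ∀ᵐ x ∂μ, (∑ i, c i • (hf i).toLp (f i) : Lp E p μ) x = ∑ i, c i • f i x := by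
    have coeFn_smul : ∀ᵐ x ∂μ, ∀ i, (c i • (hf i).toLp (f i) : Lp E p μ) x = c i • f i x := by
      refine ae_all_iff.2 fun i => ?_
      filter_upwards [Lp.coeFn_smul (c i) ((hf i).toLp (f i)), (hf i).coeFn_toLp] with x hsmul hfx
      rw [hsmul, Pi.smul_apply, hfx]
    filter_upwards [Lp.coeFn_finsetSum Finset.univ fun i => c i • (hf i).toLp (f i), coeFn_smul]
      with x hsum hsmul
    simp only [hsum, Finset.sum_apply, hsmul]
  rw [Lp.eq_zero_iff_ae_eq_zero]
  exact Filter.eventually_congr (coeFn_sum.mono fun x hx => by rw [hx, Pi.zero_apply])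

end Lp

lemma ae_linearMap_apply_ne_zero {E F : Type*} [NormedAddCommGroup E] [NormedSpace ℝ E]
    [FiniteDimensional ℝ E] [MeasurableSpace E] [BorelSpace E] [AddCommGroup F] [Module ℝ F]
    (μ : Measure E) [μ.IsAddHaarMeasure] {L : E →ₗ[ℝ] F} (hL : L ≠ 0) :
    ∀ᵐ y ∂μ, L y ≠ 0 :=
  measure_eq_zero_iff_ae_notMem.1 <|
    Measure.addHaar_submodule μ (LinearMap.ker L) (mt LinearMap.ker_eq_top.1 hL)

lemma ae_dotProduct_ne_zero {ι : Type*} [Fintype ι] {c : ι → ℝ} (hc : c ≠ 0) :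
    ∀ᵐ y : ι → ℝ, c ⬝ᵥ y ≠ 0 := by
  classical
  exact ae_linearMap_apply_ne_zero volume ((dotProductEquiv ℝ ι).map_ne_zero_iff.2 hc)

lemma bind_absolutelyContinuous_of_ae {X Y : Type*} [MeasurableSpace X] [MeasurableSpace Y]
    {κ : Kernel X Y} {μ : Measure X} {ν : Measure Y} (h : ∀ᵐ x ∂μ, κ x ≪ ν) :
    μ.bind κ ≪ ν := by
  have h_const : μ.bind κ ≪ μ.bind (Kernel.const X ν) := .comp_left μ h
  rw [Measure.const_comp] at h_const
  exact h_const.trans Measure.smul_absolutelyContinuous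

section SecondMoments

variable {X ι : Type*} [MeasurableSpace X] [Fintype ι] {π : Measure X} [NeZero π] {ψ : X → ι → ℝ}

lemma linearIndependent_toLp_of_map_absolutelyContinuous {p : ENNReal}
    (hψ : ∀ i, MemLp (fun x => ψ x i) p π) (hac : π.map ψ ≪ volume) :
    LinearIndependent ℝ fun i => (hψ i).toLp := by
  refine Fintype.linearIndependent_iff.2 fun c h_sum => congrFun ?_
  by_contra hc
  have hψm : AEMeasurable ψ π :=
    aemeasurable_pi_iff.2 fun i => (hψ i).aestronglyMeasurable.aemeasurable
  have relation : ∀ᵐ x ∂π, c ⬝ᵥ ψ x = 0 := (sum_smul_toLp_eq_zero_iff hψ c).1 h_sum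
  have no_relation : ∀ᵐ x ∂π, c ⬝ᵥ ψ x ≠ 0 :=
    ae_of_ae_map hψm (hac.ae_le (ae_dotProduct_ne_zero hc))
  obtain ⟨x, hx, hx'⟩ := (relation.and no_relation).exists
  exact hx' hx

theorem posDef_integral_mul_of_map_absolutelyContinuous
    (hψ : ∀ i, MemLp (fun x => ψ x i) 2 π) (hac : π.map ψ ≪ volume) :
    (Matrix.of fun i j => ∫ x, ψ x i * ψ x j ∂π).PosDef := by
  have gram_eq : gram ℝ (fun i => (hψ i).toLp) = .of fun i j => ∫ x, ψ x i * ψ x j ∂π := by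
    ext i j
    simp only [gram_apply, inner_memLp_toLp, RCLike.inner_apply', conj_trivial, of_apply]
  rw [← gram_eq]
  exact posDef_gram_of_linearIndependent (linearIndependent_toLp_of_map_absolutelyContinuous hψ hac)

end SecondMoments

theorem covariance_matrix_posdef_general {X ι : Type*} [MeasurableSpace X] [Fintype ι]
    (P : Kernel X X) (π : Measure X) [NeZero π] (hinv : π ≪ π.bind P)
    (ψ : X → ι → ℝ) (hψm : Measurable ψ) (hψ2 : ∀ i, MemLp (fun x => ψ x i) 2 π)
    (habs : ∀ᵐ x ∂π, (P x).map ψ ≪ volume) :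
    (Matrix.of fun i j => ∫ x, ψ x i * ψ x j ∂π).PosDef := by
  have map_bind_ac : (π.bind P).map ψ ≪ volume := by
    rw [Measure.map_comp π P hψm]
    refine bind_absolutelyContinuous_of_ae (habs.mono fun x hx => ?_)
    rwa [Kernel.map_apply P hψm]
  exact posDef_integral_mul_of_map_absolutelyContinuous hψ2 ((hinv.map hψm).trans map_bind_ac)

/-- Suppose `π` is invariant under `P`, each component of `ψ` is
in `L²(π)`, and for every `x` the image of `P(x,·)` under `ψ : X → ℝ^d` is
absolutely continuous with respect to Lebesgue measure on `ℝ^d`.  Then the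
covariance matrix `Σ_ψ = ∫ ψ(x) ψ(x)ᵀ π(dx)` is positive definite. -/
theorem covariance_matrix_posdef
    {X : Type*} [MeasurableSpace X] {d : ℕ}
    (P : Kernel X X) [IsMarkovKernel P]
    (π : Measure X) [IsProbabilityMeasure π]
    (hinv : π.bind (fun x => P x) = π)
    (ψ : X → Fin d → ℝ) (hψm : Measurable ψ)
    (hψ2 : ∀ i, MemLp (fun x => ψ x i) 2 π)
    (habs : ∀ x, Measure.map ψ (P x) ≪ (volume : Measure (Fin d → ℝ)))
    (Sψ : Matrix (Fin d) (Fin d) ℝ)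
    (hSψ : ∀ i j, Sψ i j = ∫ x, ψ x i * ψ x j ∂π) :
    Sψ.PosDef := by
  rw [show Sψ = .of fun i j => ∫ x, ψ x i * ψ x j ∂π from Matrix.ext hSψ]
  exact covariance_matrix_posdef_general P π
    hinv.symm.absolutelyContinuous ψ hψm hψ2 (.of_forall habs)
end

section
/- Let A, G, Σ_ε be d×d real matrices with A invertible and Σ_ε symmetric positive semidefinite. Suppose every eigenvalue of M := G A + (1/2) I has negative real part, and let Σ be a symmetric matrix solving the Lyapunov equation M Σ + Σ Mᵀ + G Σ_ε Gᵀ = 0. Then Σ − A⁻¹ Σ_ε (A⁻¹)ᵀ is positive semidefinite. Moreover, for the choice G = −A⁻¹, the matrix Σ* = A⁻¹ Σ_ε (A⁻¹)ᵀ solves the Lyapunov equation, so Σ* is the minimal solution over all admissible gains G in the positive semidefinite order. -/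
open Matrix

/-!
Write `Σ* = A⁻¹ Σ_ε A⁻ᵀ`. Completing the square in `G`, the residual of `Σ*` in the Lyapunov
equation with gain `G` is `(G + A⁻¹) Σ_ε (G + A⁻¹)ᵀ`. It vanishes for `G = -A⁻¹`, and it is always
positive semidefinite, so that `D = Σ - Σ*` satisfies the Lyapunov inequality `M D + D Mᵀ ≤ 0`.

The Cayley transform `C = (1 - M)⁻¹ (1 + M)` turns this inequality into `C D Cᵀ ≤ D`, hence
`Cⁿ D (Cⁿ)ᵀ ≤ D` for all `n`. It maps the open left half-plane, where the spectrum of `M` lies, into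
the open unit disc, so `Cⁿ → 0` by Gelfand's formula and `0 ≤ D` in the limit. All this takes place
in an ordered complex Banach star algebra.
-/

open Filter Topology
open scoped ComplexOrder MatrixOrder Matrix.Norms.L2Operator Ring

section PowerConvergence

variable {B : Type*} [NormedRing B] [NormedAlgebra ℂ B] [CompleteSpace B] {c : B}

theorem tendsto_pow_atTop_nhds_zero_of_spectralRadius_lt_one (hc : spectralRadius ℂ c < 1) :
    Tendsto (fun n : ℕ ↦ c ^ n) atTop (𝓝 0) := by
  obtain ⟨r, hcr, hr⟩ := ENNReal.lt_iff_exists_nnreal_btwn.1 hc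
  have norm_pow_le : ∀ᶠ n : ℕ in atTop, ‖c ^ n‖ ≤ (r : ℝ) ^ n := by
    have root_lt :=
      (spectrum.pow_nnnorm_pow_one_div_tendsto_nhds_spectralRadius c).eventually_lt_const hcr
    filter_upwards [root_lt, eventually_gt_atTop 0] with n hn hn_pos
    rw [one_div, ENNReal.rpow_inv_lt_iff (by exact_mod_cast hn_pos), ENNReal.rpow_natCast] at hn
    exact_mod_cast hn.le
  exact squeeze_zero_norm' norm_pow_le
    (tendsto_pow_atTop_nhds_zero_of_lt_one r.2 (by exact_mod_cast hr))

theorem tendsto_pow_atTop_nhds_zero_of_forall_mem_spectrum_norm_lt_one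
    (hc : ∀ z ∈ spectrum ℂ c, ‖z‖ < 1) : Tendsto (fun n : ℕ ↦ c ^ n) atTop (𝓝 0) := by
  cases subsingleton_or_nontrivial B
  · exact tendsto_const_nhds.congr fun n ↦ Subsingleton.elim 0 (c ^ n)
  · apply tendsto_pow_atTop_nhds_zero_of_spectralRadius_lt_one
    exact_mod_cast spectrum.spectralRadius_lt_of_forall_lt c (r := 1) hc

end PowerConvergence

theorem nonneg_of_conjugate_le_of_tendsto_pow {R : Type*} [Ring R] [StarRing R]
    [TopologicalSpace R] [ContinuousMul R] [ContinuousStar R] [PartialOrder R] [StarOrderedRing R]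
    [ClosedIicTopology R] {c x : R} (hc : Tendsto (fun n : ℕ ↦ c ^ n) atTop (𝓝 0))
    (hcx : c * x * star c ≤ x) : 0 ≤ x := by
  have iterate_le (n : ℕ) : c ^ n * x * star (c ^ n) ≤ x := by
    induction n with
    | zero => simp
    | succ n ih =>
      calc c ^ (n + 1) * x * star (c ^ (n + 1))
          = c ^ n * (c * x * star c) * star (c ^ n) := by simp only [pow_succ, star_mul, mul_assoc]
        _ ≤ c ^ n * x * star (c ^ n) := star_right_conjugate_le_conjugate hcx _
        _ ≤ x := ih
  have iterate_tendsto : Tendsto (fun n : ℕ ↦ c ^ n * x * star (c ^ n)) atTop (𝓝 0) := by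
    simpa using (hc.mul_const x).mul hc.star
  exact le_of_tendsto' iterate_tendsto iterate_le

/-- The Cayley transform `(1 - m)⁻¹ (1 + m)`, which turns the continuous-time Lyapunov inequality
for `m` into the discrete-time one. It is meaningful only if `1 - m` is a unit; otherwise
`⁻¹ʳ` makes it `0`. -/
noncomputable def cayleyTransform {R : Type*} [Ring R] (m : R) : R :=
  (1 - m)⁻¹ʳ * (1 + m)

theorem algebraMap_sub_cayleyTransform {𝕜 R : Type*} [CommRing 𝕜] [Ring R] [Algebra 𝕜 R] {m : R}
    (hm : IsUnit (1 - m)) (z : 𝕜) :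
    algebraMap 𝕜 R z - cayleyTransform m =
      (1 - m)⁻¹ʳ * (algebraMap 𝕜 R (z - 1) - algebraMap 𝕜 R (z + 1) * m) := by
  have clear_denominator : algebraMap 𝕜 R (z - 1) - algebraMap 𝕜 R (z + 1) * m =
      (1 - m) * algebraMap 𝕜 R z - (1 + m) := by
    rw [sub_mul, one_mul, ← Algebra.commutes z m, map_sub, map_add, map_one]
    noncomm_ring
  rw [clear_denominator, mul_sub, Ring.inverse_mul_cancel_left _ _ hm, cayleyTransform]

theorem sub_one_div_add_one_mem_spectrum_of_mem_spectrum_cayleyTransform {𝕜 R : Type*} [Field 𝕜]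
    [NeZero (2 : 𝕜)] [Ring R] [Algebra 𝕜 R] {m : R} {z : 𝕜} (hm : IsUnit (1 - m))
    (hz : z ∈ spectrum 𝕜 (cayleyTransform m)) : (z - 1) / (z + 1) ∈ spectrum 𝕜 m := by
  rw [spectrum.mem_iff, algebraMap_sub_cayleyTransform hm] at hz
  have not_isUnit : ¬IsUnit (algebraMap 𝕜 R (z - 1) - algebraMap 𝕜 R (z + 1) * m) :=
    fun h ↦ hz (hm.ringInverse.mul h)
  have add_one_ne_zero : z + 1 ≠ 0 := by
    intro h
    have sub_one_ne_zero : z - 1 ≠ 0 := by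
      rw [eq_neg_of_add_eq_zero_left h, ← neg_add', one_add_one_eq_two]
      exact neg_ne_zero.2 two_ne_zero
    exact not_isUnit (by simpa [h] using sub_one_ne_zero.isUnit.map (algebraMap 𝕜 R))
  have factor : algebraMap 𝕜 R (z - 1) - algebraMap 𝕜 R (z + 1) * m =
      algebraMap 𝕜 R (z + 1) * (algebraMap 𝕜 R ((z - 1) / (z + 1)) - m) := by
    rw [mul_sub, ← map_mul, mul_div_cancel₀ _ add_one_ne_zero]
  rw [factor] at not_isUnit
  exact fun h ↦ not_isUnit ((add_one_ne_zero.isUnit.map (algebraMap 𝕜 R)).mul h)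

theorem norm_lt_one_of_re_sub_one_div_add_one_neg {z : ℂ} (hz : ((z - 1) / (z + 1)).re < 0) :
    ‖z‖ < 1 := by
  have re_eq : ((z - 1) / (z + 1)).re = (‖z‖ ^ 2 - 1) / ‖z + 1‖ ^ 2 := by
    rw [Complex.div_re, ← add_div, ← Complex.normSq_eq_norm_sq, ← Complex.normSq_eq_norm_sq,
      Complex.normSq_apply z]
    simp only [Complex.sub_re, Complex.add_re, Complex.sub_im, Complex.add_im, Complex.one_re,
      Complex.one_im]
    ring
  contrapose! hz
  rw [re_eq]
  exact div_nonneg (sub_nonneg.2 (one_le_pow₀ hz)) (sq_nonneg _)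

section Spectrum

variable {B : Type*} [Ring B] [Algebra ℂ B] {m : B}

theorem isUnit_one_sub_of_forall_mem_spectrum_re_neg (hm : ∀ z ∈ spectrum ℂ m, z.re < 0) :
    IsUnit (1 - m) := by
  have one_notMem : (1 : ℂ) ∉ spectrum ℂ m := fun h ↦ by simpa using (hm 1 h).not_ge
  simpa using spectrum.notMem_iff.1 one_notMem

theorem norm_lt_one_of_mem_spectrum_cayleyTransform (hm : ∀ z ∈ spectrum ℂ m, z.re < 0) {z : ℂ}
    (hz : z ∈ spectrum ℂ (cayleyTransform m)) : ‖z‖ < 1 :=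
  norm_lt_one_of_re_sub_one_div_add_one_neg <| hm _ <|
    sub_one_div_add_one_mem_spectrum_of_mem_spectrum_cayleyTransform
      (isUnit_one_sub_of_forall_mem_spectrum_re_neg hm) hz

end Spectrum

theorem sub_conjugate_cayleyTransform {R : Type*} [Ring R] [StarRing R] {m : R}
    (hm : IsUnit (1 - m)) (x : R) :
    x - cayleyTransform m * x * star (cayleyTransform m) =
      (1 - m)⁻¹ʳ * (-(2 * (m * x + x * star m))) * star (1 - m)⁻¹ʳ := by
  have conjugate_cancel : (1 - m)⁻¹ʳ * ((1 - m) * x * star (1 - m)) * star (1 - m)⁻¹ʳ = x := by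
    rw [mul_assoc, mul_assoc _ (star (1 - m)), ← star_mul, Ring.inverse_mul_cancel _ hm, star_one,
      mul_one, Ring.inverse_mul_cancel_left _ _ hm]
  have expand : -(2 * (m * x + x * star m)) =
      (1 - m) * x * star (1 - m) - (1 + m) * x * star (1 + m) := by
    rw [star_sub, star_add, star_one]
    noncomm_ring
  rw [expand, mul_sub, sub_mul, conjugate_cancel]
  simp only [cayleyTransform, star_mul, mul_assoc]

theorem nonneg_of_mul_add_mul_star_nonpos {B : Type*} [NormedRing B] [NormedAlgebra ℂ B]
    [CompleteSpace B] [StarRing B] [ContinuousStar B] [PartialOrder B] [StarOrderedRing B]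
    [ClosedIicTopology B] {m x : B} (hm : ∀ z ∈ spectrum ℂ m, z.re < 0)
    (hx : m * x + x * star m ≤ 0) : 0 ≤ x := by
  have pow_tendsto : Tendsto (fun n : ℕ ↦ cayleyTransform m ^ n) atTop (𝓝 0) :=
    tendsto_pow_atTop_nhds_zero_of_forall_mem_spectrum_norm_lt_one fun _ ↦
      norm_lt_one_of_mem_spectrum_cayleyTransform hm
  refine nonneg_of_conjugate_le_of_tendsto_pow pow_tendsto (sub_nonneg.1 ?_)
  rw [sub_conjugate_cayleyTransform (isUnit_one_sub_of_forall_mem_spectrum_re_neg hm)]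
  have two_mul_nonpos : 2 * (m * x + x * star m) ≤ 0 := by
    rw [two_mul]
    exact add_nonpos hx hx
  exact star_right_conjugate_nonneg (neg_nonneg_of_nonpos two_mul_nonpos) _

section Gain

variable {R : Type*} [Ring R] [StarRing R] [Algebra ℝ R] [StarModule ℝ R] {a b : R}

theorem lyapunov_residual_eq_conjugate (hab : a * b = 1) (g e : R) :
    (g * a + ((1 : ℝ) / 2) • 1) * (b * e * star b) +
        (b * e * star b) * star (g * a + ((1 : ℝ) / 2) • 1) + g * e * star g =
      (g + b) * e * star (g + b) := by
  have drift_mul : g * a * (b * e * star b) = g * e * star b := by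
    rw [mul_assoc b, mul_assoc g, ← mul_assoc a, hab, one_mul, mul_assoc]
  have mul_star_drift : b * e * star b * star (g * a) = b * e * star g := by
    rw [mul_assoc, ← star_mul, mul_assoc g, hab, mul_one]
  have halves : ((1 : ℝ) / 2) • (b * e * star b) + ((1 : ℝ) / 2) • (b * e * star b) =
      b * e * star b := by
    rw [← add_smul, add_halves, one_smul]
  calc _ = g * e * star b + b * e * star g +
        (((1 : ℝ) / 2) • (b * e * star b) + ((1 : ℝ) / 2) • (b * e * star b)) +
        g * e * star g := by
          simp only [add_mul _ _ (b * e * star b), star_add, mul_add (b * e * star b), drift_mul,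
            mul_star_drift, star_smul, star_one, star_trivial, smul_mul_assoc, mul_smul_comm,
            one_mul, mul_one]
          abel
    _ = (g + b) * e * star (g + b) := by
          rw [halves, star_add]
          noncomm_ring

/-- The map `φ` represents the real star ring `R` in a complex Banach algebra, where the spectrum of
the drift is taken: it is the identity for a complex algebra `R`, and complexification for real
matrices. -/
theorem lyapunov_minimal_asymptotic_covariance_general [PartialOrder R] [StarOrderedRing R]
    {B : Type*} [NormedRing B] [NormedAlgebra ℂ B] [CompleteSpace B] [StarRing B]
    [ContinuousStar B] [PartialOrder B] [StarOrderedRing B] [ClosedIicTopology B]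
    (φ : R →⋆ₙ+* B) (hφ : ∀ x, 0 ≤ φ x → 0 ≤ x) {g e s : R} (hab : a * b = 1) (he : 0 ≤ e)
    (hspec : ∀ z ∈ spectrum ℂ (φ (g * a + ((1 : ℝ) / 2) • 1)), z.re < 0)
    (hlyap : (g * a + ((1 : ℝ) / 2) • 1) * s + s * star (g * a + ((1 : ℝ) / 2) • 1) +
      g * e * star g = 0) :
    b * e * star b ≤ s ∧
    (-b * a + ((1 : ℝ) / 2) • 1) * (b * e * star b) +
        (b * e * star b) * star (-b * a + ((1 : ℝ) / 2) • 1) + -b * e * star (-b) = 0 := by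
  refine ⟨sub_nonneg.1 ?_, by simpa using lyapunov_residual_eq_conjugate hab (-b) e⟩
  have residual := lyapunov_residual_eq_conjugate hab g e
  set m := g * a + ((1 : ℝ) / 2) • 1
  set d := s - b * e * star b with hd
  have difference_nonpos : m * d + d * star m ≤ 0 :=
    calc m * d + d * star m
        = (m * s + s * star m + g * e * star g) - (m * (b * e * star b) +
            b * e * star b * star m + g * e * star g) := by rw [hd, mul_sub, sub_mul]; abel
      _ = -((g + b) * e * star (g + b)) := by rw [hlyap, residual, zero_sub]
      _ ≤ 0 := neg_nonpos.2 (star_right_conjugate_nonneg he _)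
  have image_nonpos : φ m * φ d + φ d * star (φ m) ≤ 0 := by
    simpa only [map_add, map_mul, map_star, map_zero] using
      OrderHomClass.mono φ difference_nonpos
  exact hφ d (nonneg_of_mul_add_mul_star_nonpos hspec image_nonpos)

end Gain

section Complexification

variable {n : Type*} [Fintype n]

/-- The entrywise inclusion of real matrices into complex matrices, as a star ring
homomorphism; the unit law is not part of the bundled type `→⋆ₙ+*`. -/
def complexifyMatrix : Matrix n n ℝ →⋆ₙ+* Matrix n n ℂ where
  toFun X := X.map Complex.ofReal
  map_mul' _ _ := Matrix.map_mul (f := Complex.ofRealHom)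
  map_zero' := Matrix.map_zero _ Complex.ofReal_zero
  map_add' := Matrix.map_add _ Complex.ofReal_add
  map_star' _ := conjTranspose_map _ fun x ↦ (Complex.conj_ofReal x).symm

@[simp]
theorem complexifyMatrix_apply (X : Matrix n n ℝ) (i j : n) :
    complexifyMatrix X i j = X i j :=
  rfl

theorem nonneg_of_complexifyMatrix_nonneg {X : Matrix n n ℝ} (hX : 0 ≤ complexifyMatrix X) :
    0 ≤ X := by
  rw [nonneg_iff_posSemidef] at hX ⊢
  have isHermitian : X.IsHermitian :=
    (isHermitian_map_iff (fun x ↦ (Complex.conj_ofReal x).symm) Complex.ofReal_injective).1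
      hX.isHermitian
  refine .of_dotProduct_mulVec_nonneg isHermitian fun x ↦ ?_
  have quadratic_form_eq :
      star (Complex.ofReal ∘ x) ⬝ᵥ (complexifyMatrix X *ᵥ (Complex.ofReal ∘ x)) =
        ((star x ⬝ᵥ (X *ᵥ x) : ℝ) : ℂ) := by
    simp [dotProduct, mulVec]
  rw [← Complex.zero_le_real, ← quadratic_form_eq]
  exact hX.dotProduct_mulVec_nonneg _

end Complexification

/-- Let `A, G, Σ_ε` be `d×d` real matrices with `A` invertible and
`Σ_ε` symmetric positive semidefinite.  Suppose every eigenvalue of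
`M = G A + (1/2) I` has negative real part, and let `Σ` be a symmetric solution
of the Lyapunov equation `M Σ + Σ Mᵀ + G Σ_ε Gᵀ = 0`.  Then
`Σ − A⁻¹ Σ_ε (A⁻¹)ᵀ` is positive semidefinite.  Moreover, for `G = −A⁻¹`, the
matrix `Σ* = A⁻¹ Σ_ε (A⁻¹)ᵀ` solves the Lyapunov equation, so `Σ*` is the
minimal solution over all admissible gains in the positive semidefinite
order. -/
theorem lyapunov_minimal_asymptotic_covariance
    {d : ℕ}
    (A G Se Sm : Matrix (Fin d) (Fin d) ℝ)
    (hA : IsUnit A)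
    (hSe : Se.PosSemidef)
    (hspec : ∀ z : ℂ, z ∈ spectrum ℂ
        ((G * A + ((1 : ℝ) / 2) • (1 : Matrix (Fin d) (Fin d) ℝ)).map
          (Complex.ofReal : ℝ → ℂ)) → z.re < 0)
    (hSsymm : Sm.IsSymm)
    (hlyap : (G * A + ((1 : ℝ) / 2) • (1 : Matrix (Fin d) (Fin d) ℝ)) * Sm +
        Sm * (G * A + ((1 : ℝ) / 2) • (1 : Matrix (Fin d) (Fin d) ℝ))ᵀ +
        G * Se * Gᵀ = 0) :
    (Sm - A⁻¹ * Se * (A⁻¹)ᵀ).PosSemidef ∧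
    ((-A⁻¹) * A + ((1 : ℝ) / 2) • (1 : Matrix (Fin d) (Fin d) ℝ)) *
        (A⁻¹ * Se * (A⁻¹)ᵀ) +
      (A⁻¹ * Se * (A⁻¹)ᵀ) *
        ((-A⁻¹) * A + ((1 : ℝ) / 2) • (1 : Matrix (Fin d) (Fin d) ℝ))ᵀ +
      (-A⁻¹) * Se * (-A⁻¹)ᵀ = 0 := by
  simpa only [star_eq_conjTranspose, conjTranspose_eq_transpose_of_trivial, Matrix.le_iff]
    using lyapunov_minimal_asymptotic_covariance_general complexifyMatrix
      (fun _ ↦ nonneg_of_complexifyMatrix_nonneg)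
      (mul_nonsing_inv A ((isUnit_iff_isUnit_det A).1 hA)) hSe.nonneg hspec hlyap
end
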